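/- arXiv:2102.06620 — 3 statements merged into one kernel-verified Lean document; each statement's English description precedes it below -/
import Mathlib

section
/- Let 𝒯 and 𝒳 be complete separable metric spaces, let 0 be a distinguished point of 𝒳, let E = 𝒯×𝒳 carry the sum metric, and let F = 𝒯×{0}. Let λ be a finite Borel measure on 𝒯, and let ν_n (n ≥ 1) and μ be Borel measures on 𝒳 with ν_n({x : d(0,x) ≥ r}) < ∞ and μ({x : d(0,x) ≥ r}) < ∞ for all r > 0, such that ∫ h dν_n → ∫ h dμ for every bounded continuous h : 𝒳 → ℝ vanishing on B(0,r) for some r > 0. Then for every integer k ≥ 1 and every bounded continuous f : E^k → ℝ for which there exists r > 0 such that f(z_1,…,z_k) = 0 whenever some coordinate z_i = (t_i,x_i) has d(0,x_i) < r, one has ∫ f d(λ⊗ν_n)^{⊗k} → ∫ f d(λ⊗μ)^{⊗k} as n → ∞. -/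
open MeasureTheory Filter Metric Topology

/-- Without any σ-finiteness, restriction of the product measure to a box of finite measure. -/
theorem pi_restrict_box {E : Type*} [MeasurableSpace E] {k : ℕ} (m : Measure E) (A : Set E)
    (hA : MeasurableSet A) (hfin : m A ≠ ⊤) :
    (Measure.pi fun _ : Fin k => m).restrict (Set.univ.pi fun _ => A) =
      Measure.pi fun _ : Fin k => m.restrict A := by
  have : IsFiniteMeasure (m.restrict A) := ⟨by simpa using hfin.lt_top⟩
  symm
  apply Measure.pi_eq
  intro s hs
  have hms : MeasurableSet (Set.univ.pi s) := MeasurableSet.univ_pi hs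
  rw [Measure.restrict_apply hms, ← Set.pi_inter_distrib]
  have hm2 : MeasurableSet (Set.univ.pi fun i => s i ∩ A) :=
    MeasurableSet.univ_pi fun i => (hs i).inter hA
  have hr : ∀ i, m.restrict A (s i) = m (s i ∩ A) := fun i => Measure.restrict_apply (hs i)
  simp_rw [hr]
  rw [Measure.pi, toMeasure_apply _ _ hm2]
  apply le_antisymm
  · exact OuterMeasure.pi_pi_le _ _
  · have h : (Measure.pi fun _ : Fin k => m.restrict A).toOuterMeasure ≤
        OuterMeasure.pi fun _ : Fin k => m.toOuterMeasure := by
      rw [OuterMeasure.le_pi]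
      intro t _
      change (Measure.pi fun _ : Fin k => m.restrict A) (Set.univ.pi t) ≤ ∏ i, m (t i)
      rw [Measure.pi_pi]
      exact Finset.prod_le_prod' fun i _ => Measure.restrict_apply_le _ _
    refine le_trans (le_of_eq ?_) (h _)
    change _ = (Measure.pi fun _ : Fin k => m.restrict A) (Set.univ.pi fun i => s i ∩ A)
    rw [Measure.pi_pi]
    refine Finset.prod_congr rfl fun i _ => ?_
    rw [Measure.restrict_apply ((hs i).inter hA), Set.inter_assoc, Set.inter_self]

theorem sfinite_of_away {X : Type*} [MetricSpace X] [MeasurableSpace X] [BorelSpace X] (x0 : X)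
    (μ : Measure X) (h : ∀ r > (0 : ℝ), μ {x | r ≤ dist x0 x} ≠ ⊤) : SFinite μ := by
  have h1 : SFinite (μ.restrict {x0}) := by
    rw [Measure.restrict_singleton]; infer_instance
  have h2 : SFinite (μ.restrict {x0}ᶜ) := by
    let S : ℕ → Set X := fun n => {x | 1 / ((n : ℝ) + 1) ≤ dist x0 x}
    have hS : ∀ n, MeasurableSet (S n) := fun n =>
      (isClosed_le continuous_const (continuous_const.dist continuous_id)).measurableSet
    have hU : {x0}ᶜ = ⋃ n, disjointed S n := by
      rw [iUnion_disjointed]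
      ext x
      simp only [Set.mem_compl_iff, Set.mem_singleton_iff, Set.mem_iUnion, S, Set.mem_ofPred_eq]
      constructor
      · intro hx
        obtain ⟨n, hn⟩ := exists_nat_one_div_lt (dist_pos.2 (Ne.symm hx))
        exact ⟨n, hn.le⟩
      · rintro ⟨n, hn⟩ rfl
        rw [dist_self] at hn
        have : 0 < 1 / ((n : ℝ) + 1) := by positivity
        linarith
    rw [hU, Measure.restrict_iUnion (disjoint_disjointed S)
      (fun n => MeasurableSet.disjointed hS n)]
    have : ∀ n, IsFiniteMeasure (μ.restrict (disjointed S n)) := fun n => ⟨by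
      rw [Measure.restrict_apply_univ]
      exact (measure_mono (disjointed_subset S n)).trans_lt (h _ (by positivity)).lt_top⟩
    infer_instance
  rw [← Measure.restrict_add_restrict_compl (μ := μ) (measurableSet_singleton x0)]
  infer_instance

theorem normalize_pi {E : Type*} [MeasurableSpace E] [Nonempty E] {k : ℕ} (m : FiniteMeasure E)
    (hm : m ≠ 0) :
    (FiniteMeasure.pi fun _ : Fin k => m).normalize =
      ProbabilityMeasure.pi fun _ : Fin k => m.normalize := by
  have hmass : m.mass ≠ 0 := (FiniteMeasure.mass_nonzero_iff m).2 hm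
  have h0 : (FiniteMeasure.pi fun _ : Fin k => m) ≠ 0 := by
    rw [← FiniteMeasure.mass_nonzero_iff, FiniteMeasure.mass_pi]
    exact Finset.prod_ne_zero_iff.2 fun _ _ => hmass
  apply Subtype.ext
  change _ = Measure.pi _
  symm
  apply Measure.pi_eq
  intro s hs
  change ((FiniteMeasure.pi fun _ : Fin k => m).normalize : Measure (Fin k → E)) (Set.univ.pi s) =
    ∏ i, (m.normalize : Measure E) (s i)
  rw [FiniteMeasure.toMeasure_normalize_eq_of_nonzero _ h0,
    FiniteMeasure.toMeasure_normalize_eq_of_nonzero _ hm, FiniteMeasure.mass_pi]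
  rw [FiniteMeasure.toMeasure_pi]
  simp only [Measure.smul_apply, Measure.pi_pi, ENNReal.smul_def, smul_eq_mul,
    Finset.prod_mul_distrib, Finset.prod_const]
  congr 1
  rw [← inv_pow, ENNReal.coe_pow]

theorem tendsto_pi_finite {E : Type*} [TopologicalSpace E] [MeasurableSpace E]
    [SecondCountableTopology E] [TopologicalSpace.PseudoMetrizableSpace E] [BorelSpace E]
    {k : ℕ} (hk : 1 ≤ k) (m : ℕ → FiniteMeasure E) (m' : FiniteMeasure E)
    (h : Tendsto m atTop (𝓝 m')) :
    Tendsto (fun n => FiniteMeasure.pi fun _ : Fin k => m n) atTop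
      (𝓝 (FiniteMeasure.pi fun _ : Fin k => m')) := by
  have hmass : Tendsto (fun n => (FiniteMeasure.pi fun _ : Fin k => m n).mass) atTop
      (𝓝 (FiniteMeasure.pi fun _ : Fin k => m').mass) := by
    simp only [FiniteMeasure.mass_pi, Finset.prod_const]
    exact h.mass.pow _
  by_cases hm : m' = 0
  · have hz : (FiniteMeasure.pi fun _ : Fin k => m') = 0 := by
      rw [← FiniteMeasure.mass_zero_iff, FiniteMeasure.mass_pi, hm]
      simp; omega
    rw [hz] at hmass ⊢
    exact FiniteMeasure.tendsto_zero_of_tendsto_zero_mass (by simpa using hmass)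
  have hne : Nonempty E := by
    by_contra hE
    rw [not_nonempty_iff] at hE
    exact hm (Subtype.ext (Subsingleton.elim _ _))
  have h0 : (FiniteMeasure.pi fun _ : Fin k => m') ≠ 0 := by
    rw [← FiniteMeasure.mass_nonzero_iff, FiniteMeasure.mass_pi]
    exact Finset.prod_ne_zero_iff.2 fun _ _ => (FiniteMeasure.mass_nonzero_iff _).2 hm
  rw [← FiniteMeasure.tendsto_normalize_iff_tendsto h0]
  refine ⟨?_, hmass⟩
  have hn := FiniteMeasure.tendsto_normalize_of_tendsto h hm
  rw [normalize_pi _ hm]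
  have hev : ∀ᶠ n in atTop, m n ≠ 0 := by
    filter_upwards [h.mass.eventually_ne ((FiniteMeasure.mass_nonzero_iff _).2 hm)] with n hn
    exact (FiniteMeasure.mass_nonzero_iff _).1 hn
  have hc := (ProbabilityMeasure.continuous_pi (ι := Fin k) (α := fun _ => E)).tendsto
    (fun _ => m'.normalize)
  refine (hc.comp (tendsto_pi_nhds.2 fun _ => hn)).congr' ?_
  filter_upwards [hev] with n hn
  exact (normalize_pi _ hn).symm

theorem tendsto_prod_finite {T X : Type*} [TopologicalSpace T] [MeasurableSpace T]
    [SecondCountableTopology T] [TopologicalSpace.PseudoMetrizableSpace T] [BorelSpace T]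
    [TopologicalSpace X] [MeasurableSpace X]
    [SecondCountableTopology X] [TopologicalSpace.PseudoMetrizableSpace X] [BorelSpace X]
    (l : FiniteMeasure T) (m : ℕ → FiniteMeasure X) (m' : FiniteMeasure X)
    (h : Tendsto m atTop (𝓝 m')) :
    Tendsto (fun n => l.prod (m n)) atTop (𝓝 (l.prod m')) := by
  rw [FiniteMeasure.tendsto_iff_forall_integral_tendsto] at h ⊢
  intro f
  have hb : ∀ x, ‖∫ t, f (t, x) ∂(l : Measure T)‖ ≤ ‖f‖ * (l : Measure T).real Set.univ := fun x =>
    norm_integral_le_of_norm_le_const (Eventually.of_forall fun t => f.norm_coe_le_norm _)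
  have hc : Continuous fun x => ∫ t, f (t, x) ∂(l : Measure T) := by
    refine continuous_of_dominated (bound := fun _ => ‖f‖) ?_ ?_ ?_ ?_
    · intro x
      exact (by fun_prop : Continuous fun t => f (t, x)).aestronglyMeasurable
    · exact fun x => Eventually.of_forall fun t => f.norm_coe_le_norm _
    · exact integrable_const _
    · exact Eventually.of_forall fun t => by fun_prop
  let g : BoundedContinuousFunction X ℝ := BoundedContinuousFunction.ofNormedAddCommGroup _ hc _ hb
  have key : ∀ q : FiniteMeasure X, ∫ z, f z ∂((l.prod q : FiniteMeasure _) : Measure (T × X)) =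
      ∫ x, g x ∂(q : Measure X) := by
    intro q
    rw [FiniteMeasure.toMeasure_prod, integral_prod_symm]
    · rfl
    · exact f.integrable _
  simp_rw [key]
  exact h g

theorem integral_pi_localize {T X : Type*} [MeasurableSpace T] [MeasurableSpace X]
    (lam : Measure T) [IsFiniteMeasure lam] (q : Measure X) [SFinite q] (A : Set X)
    (hA : MeasurableSet A) (hfin : q A ≠ ⊤) {k : ℕ} (f : (Fin k → T × X) → ℝ)
    (hf : ∀ z : Fin k → T × X, (∃ i, (z i).2 ∉ A) → f z = 0) :
    ∫ z, f z ∂(Measure.pi fun _ : Fin k => lam.prod q) =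
      ∫ z, f z ∂(Measure.pi fun _ : Fin k => lam.prod (q.restrict A)) := by
  have hp : lam.prod (q.restrict A) = (lam.prod q).restrict (Set.univ ×ˢ A) := by
    rw [← Measure.prod_restrict, Measure.restrict_univ]
  rw [hp, ← pi_restrict_box _ _ (MeasurableSet.univ.prod hA)]
  · symm
    apply setIntegral_eq_integral_of_forall_compl_eq_zero
    intro z hz
    apply hf
    simpa using hz
  · rw [Measure.prod_prod]
    exact ENNReal.mul_ne_top (measure_ne_top _ _) hfin

/-- Convergence of tensor powers of product measures `(λ⊗ν_n)^{⊗k} → (λ⊗μ)^{⊗k}`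
(Lemma 5.1 of the paper). -/
theorem stmt_3
    {T : Type*} [MetricSpace T] [CompleteSpace T] [TopologicalSpace.SeparableSpace T]
    [MeasurableSpace T] [BorelSpace T]
    {X : Type*} [MetricSpace X] [CompleteSpace X] [TopologicalSpace.SeparableSpace X]
    [MeasurableSpace X] [BorelSpace X]
    (x0 : X)
    (lam : Measure T) [IsFiniteMeasure lam]
    (ν : ℕ → Measure X) (μ : Measure X)
    (hνFin : ∀ n, ∀ r > (0 : ℝ), ν n {x | r ≤ dist x0 x} ≠ ⊤)
    (hμFin : ∀ r > (0 : ℝ), μ {x | r ≤ dist x0 x} ≠ ⊤)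
    (hconv : ∀ h : X → ℝ, Continuous h → (∃ C, ∀ x, |h x| ≤ C) →
      (∃ r > (0 : ℝ), ∀ x, dist x0 x < r → h x = 0) →
      Tendsto (fun n : ℕ => ∫ x, h x ∂(ν n)) atTop (𝓝 (∫ x, h x ∂μ)))
    (k : ℕ) (hk : 1 ≤ k)
    (f : (Fin k → T × X) → ℝ) (hfc : Continuous f) (hfb : ∃ C, ∀ z, |f z| ≤ C)
    (hfvan : ∃ r > (0 : ℝ), ∀ z : Fin k → T × X, (∃ i, dist x0 (z i).2 < r) → f z = 0) :
    Tendsto (fun n : ℕ => ∫ z, f z ∂(Measure.pi fun _ : Fin k => lam.prod (ν n))) atTop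
      (𝓝 (∫ z, f z ∂(Measure.pi fun _ : Fin k => lam.prod μ))) := by
  obtain ⟨r, hr, hfr⟩ := hfvan
  obtain ⟨C, hC⟩ := hfb
  have : SecondCountableTopology T := UniformSpace.secondCountable_of_separable T
  have : SecondCountableTopology X := UniformSpace.secondCountable_of_separable X
  have hmeas : ∀ s : ℝ, MeasurableSet {x | s ≤ dist x0 x} := fun s =>
    (isClosed_le continuous_const (continuous_const.dist continuous_id)).measurableSet
  -- the cutoff function
  let g : X → NNReal := fun x => Real.toNNReal (min 1 (2 * dist x0 x / r - 1))
  have hgc : Continuous g := by fun_prop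
  have hg1 : ∀ x, g x ≤ 1 := fun x => by
    simp only [g]
    rw [Real.toNNReal_le_one]
    exact min_le_left _ _
  have hg0 : ∀ x, dist x0 x < r / 2 → g x = 0 := fun x hx => by
    simp only [g]
    rw [Real.toNNReal_eq_zero]
    refine (min_le_right _ _).trans ?_
    rw [sub_nonpos, div_le_one hr]
    linarith
  have hgr : ∀ x, r ≤ dist x0 x → g x = 1 := fun x hx => by
    simp only [g]
    rw [Real.toNNReal_eq_one, min_eq_left]
    rw [le_sub_iff_add_le, le_div_iff₀ hr]
    linarith
  have hfinW : ∀ q : Measure X, (∀ s > (0 : ℝ), q {x | s ≤ dist x0 x} ≠ ⊤) →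
      IsFiniteMeasure (q.withDensity fun x => (g x : ENNReal)) := by
    intro q hq
    apply isFiniteMeasure_withDensity
    have hle : ∫⁻ x, (g x : ENNReal) ∂q ≤
        ∫⁻ x, ({x | r / 2 ≤ dist x0 x}).indicator 1 x ∂q := by
      apply lintegral_mono
      intro x
      by_cases hx : r / 2 ≤ dist x0 x
      · rw [Set.indicator_of_mem (by exact hx)]
        change (g x : ENNReal) ≤ 1
        exact_mod_cast hg1 x
      · simp [hg0 x (not_le.1 hx)]
    rw [lintegral_indicator_one (hmeas _)] at hle
    exact ne_top_of_le_ne_top (hq _ (by positivity)) hle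
  have hres : ∀ q : Measure X, (∀ s > (0 : ℝ), q {x | s ≤ dist x0 x} ≠ ⊤) →
      ∫ z, f z ∂(Measure.pi fun _ : Fin k => lam.prod q) =
      ∫ z, f z ∂(Measure.pi fun _ : Fin k =>
        lam.prod (q.withDensity fun x => (g x : ENNReal))) := by
    intro q hq
    have := hfinW q hq
    have := sfinite_of_away x0 q hq
    have hv : ∀ z : Fin k → T × X, (∃ i, (z i).2 ∉ {x | r ≤ dist x0 x}) → f z = 0 := by
      rintro z ⟨i, hi⟩
      exact hfr z ⟨i, not_le.1 hi⟩
    rw [integral_pi_localize lam q _ (hmeas r) (hq r hr) f hv,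
      integral_pi_localize lam (q.withDensity fun x => (g x : ENNReal)) _ (hmeas r)
        (measure_ne_top _ _) f hv, restrict_withDensity (hmeas r)]
    have he : (q.restrict {x | r ≤ dist x0 x}).withDensity (fun x => (g x : ENNReal)) =
        q.restrict {x | r ≤ dist x0 x} := by
      conv_rhs => rw [← withDensity_one (μ := q.restrict {x | r ≤ dist x0 x})]
      apply withDensity_congr_ae
      filter_upwards [ae_restrict_mem (hmeas r)] with x hx
      simp [hgr x hx]
    rw [he]
  let m : ℕ → FiniteMeasure X := fun n => ⟨(ν n).withDensity fun x => (g x : ENNReal),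
    hfinW _ (hνFin n)⟩
  let m' : FiniteMeasure X := ⟨μ.withDensity fun x => (g x : ENNReal), hfinW _ hμFin⟩
  have hm : Tendsto m atTop (𝓝 m') := by
    rw [FiniteMeasure.tendsto_iff_forall_integral_tendsto]
    intro h
    change Tendsto (fun n => ∫ x, h x ∂((ν n).withDensity fun x => (g x : ENNReal))) atTop
      (𝓝 (∫ x, h x ∂(μ.withDensity fun x => (g x : ENNReal))))
    simp_rw [integral_withDensity_eq_integral_smul hgc.measurable]
    apply hconv
    · exact hgc.smul h.continuous
    · refine ⟨‖h‖, fun x => ?_⟩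
      rw [NNReal.smul_def, smul_eq_mul, abs_mul, NNReal.abs_eq]
      have h1 : (g x : ℝ) ≤ 1 := by exact_mod_cast hg1 x
      have h2 : |h x| ≤ ‖h‖ := h.norm_coe_le_norm x
      nlinarith [abs_nonneg (h x)]
    · exact ⟨r / 2, by positivity, fun x hx => by simp [hg0 x hx]⟩
  let l : FiniteMeasure T := ⟨lam, inferInstance⟩
  have hfinal := tendsto_pi_finite hk _ _ (tendsto_prod_finite l m m' hm)
  rw [FiniteMeasure.tendsto_iff_forall_integral_tendsto] at hfinal
  have hF := hfinal (BoundedContinuousFunction.ofNormedAddCommGroup f hfc C hC)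
  rw [hres μ hμFin]
  simp_rw [fun n => hres (ν n) (hνFin n)]
  exact hF
end

section
/- Suppose 𝒯 is locally compact, let ν be a Borel probability measure on 𝒳 with ν({0}) = 0 that is regularly varying with scaling sequence (a_n) and limit measure μ, and let ν_n denote the Borel measure on 𝒳 given by ν_n(A) = n·ν({x : a_n⁻¹•x ∈ A}). Let k ≥ 0, let r > 0 satisfy μ({x : d(0,x) = r}) = 0, and let f : 𝒯×𝒳 → [0,∞) be bounded Lipschitz continuous with f(t,x) = 0 whenever d(0,x) < r. Define (L_{k+1,n}f)(t_1,…,t_{k+1}) = ∫_{{d(0,x)≥r}^{k+1}} e^{−Σ_{i=1}^{k+1} f(t_i,x_i)} ν_n(dx_1)⋯ν_n(dx_{k+1}) and (L_{k+1}f)(t_1,…,t_{k+1}) = ∫_{{d(0,x)≥r}^{k+1}} e^{−Σ_{i=1}^{k+1} f(t_i,x_i)} μ(dx_1)⋯μ(dx_{k+1}). Then L_{k+1,n}f → L_{k+1}f uniformly on 𝒯^{k+1} as n → ∞, and the sequence (L_{k+1,n}f)_{n ≥ 1} is uniformly bounded on 𝒯^{k+1}. -/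
open MeasureTheory Filter Metric Topology

lemma aux_bdd_int {X : Type*} [TopologicalSpace X] [MeasurableSpace X] [BorelSpace X]
    (m : Measure X) [IsFiniteMeasure m] (h : X → ℝ) (hc : Continuous h)
    (C : ℝ) (hb : ∀ x, |h x| ≤ C) : Integrable h m :=
  Integrable.of_bound hc.measurable.aestronglyMeasurable C
    (Eventually.of_forall fun x => by simpa using hb x)

lemma aux_part {X : Type*} [PseudoMetricSpace X] [MeasurableSpace X] [BorelSpace X]
    (m : Measure X) [IsFiniteMeasure m] (K : NNReal) (η : ℝ) (hη : 0 < η) (N : ℕ)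
    (y : ℕ → X) (p : ℕ → X → ℝ) (hpc : ∀ j, Continuous (p j)) (hp0 : ∀ j x, 0 ≤ p j x)
    (hps : ∀ x, ∑ j ∈ Finset.range N, p j x ≤ 1)
    (hp1 : ∀ j x, p j x ≤ η * (N + 1))
    (hpd : ∀ j x, η ≤ dist x (y j) → p j x = 0)
    (g : X → ℝ) (hg : LipschitzWith K g) (hg1 : ∀ x, |g x| ≤ 1) :
    |∫ x, g x ∂m - ∑ j ∈ Finset.range N, g (y j) * ∫ x, p j x ∂m| ≤
      K * η * m.real Set.univ + ∫ x, (1 - ∑ j ∈ Finset.range N, p j x) ∂m := by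
  have hpi : ∀ j, Integrable (p j) m := fun j =>
    aux_bdd_int m _ (hpc j) _ (fun x => by rw [abs_of_nonneg (hp0 j x)]; exact hp1 j x)
  have hgi : Integrable g m := aux_bdd_int m g hg.continuous 1 hg1
  have hsi : Integrable (fun x => ∑ j ∈ Finset.range N, g (y j) * p j x) m :=
    integrable_finsetSum _ fun j _ => (hpi j).const_mul _
  have hsi2 : Integrable (fun x => ∑ j ∈ Finset.range N, p j x) m :=
    integrable_finsetSum _ fun j _ => (hpi j)
  have e1 : ∑ j ∈ Finset.range N, g (y j) * ∫ x, p j x ∂m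
      = ∫ x, ∑ j ∈ Finset.range N, g (y j) * p j x ∂m := by
    rw [integral_finsetSum _ fun j _ => (hpi j).const_mul _]
    simp [integral_const_mul]
  have e2 : K * η * m.real Set.univ + ∫ x, (1 - ∑ j ∈ Finset.range N, p j x) ∂m
      = ∫ x, (K * η + (1 - ∑ j ∈ Finset.range N, p j x)) ∂m := by
    have hi : Integrable (fun x => 1 - ∑ j ∈ Finset.range N, p j x) m :=
      (integrable_const _).sub hsi2
    rw [integral_add (integrable_const _) hi, integral_const, smul_eq_mul,
      mul_comm (m.real Set.univ)]
  rw [e1, e2, ← integral_sub hgi hsi]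
  refine (abs_integral_le_integral_abs).trans ?_
  refine integral_mono (hgi.sub hsi).abs
    ((integrable_const _).add ((integrable_const _).sub hsi2)) ?_
  intro x
  have d : g x - ∑ j ∈ Finset.range N, g (y j) * p j x
      = g x * (1 - ∑ j ∈ Finset.range N, p j x)
        + ∑ j ∈ Finset.range N, (g x - g (y j)) * p j x := by
    simp only [sub_mul, Finset.sum_sub_distrib, mul_sub, Finset.mul_sum]; ring
  have hK : (0:ℝ) ≤ K * η := by positivity
  have b1 : |∑ j ∈ Finset.range N, (g x - g (y j)) * p j x| ≤ K * η := by
    calc _ ≤ ∑ j ∈ Finset.range N, |(g x - g (y j)) * p j x| := Finset.abs_sum_le_sum_abs _ _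
      _ ≤ ∑ j ∈ Finset.range N, K * η * p j x := by
        refine Finset.sum_le_sum fun j _ => ?_
        rw [abs_mul, abs_of_nonneg (hp0 j x)]
        rcases le_or_gt η (dist x (y j)) with h | h
        · simp [hpd j x h]
        · refine mul_le_mul_of_nonneg_right ?_ (hp0 j x)
          rw [← Real.dist_eq]
          exact (hg.dist_le_mul _ _).trans (mul_le_mul_of_nonneg_left h.le K.2)
      _ = K * η * ∑ j ∈ Finset.range N, p j x := by rw [Finset.mul_sum]
      _ ≤ K * η := mul_le_of_le_one_right hK (hps x)
  have b2 : |g x * (1 - ∑ j ∈ Finset.range N, p j x)| ≤ 1 - ∑ j ∈ Finset.range N, p j x := by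
    have := hps x
    rw [abs_mul, abs_of_nonneg (a := 1 - ∑ j ∈ Finset.range N, p j x) (by linarith)]
    exact mul_le_of_le_one_left (by linarith) (hg1 x)
  change |g x - ∑ j ∈ Finset.range N, g (y j) * p j x| ≤ _
  rw [d]
  refine (abs_add_le _ _).trans ?_
  show _ ≤ K * η + (1 - ∑ j ∈ Finset.range N, p j x)
  linarith

lemma aux_unif {X : Type*} [PseudoMetricSpace X] [TopologicalSpace.SeparableSpace X]
    [Nonempty X] [MeasurableSpace X] [BorelSpace X]
    (m : ℕ → Measure X) [∀ n, IsFiniteMeasure (m n)] (m0 : Measure X) [IsFiniteMeasure m0]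
    (hw : ∀ h : X → ℝ, Continuous h → (∃ C, ∀ x, |h x| ≤ C) →
      Tendsto (fun n => ∫ x, h x ∂(m n)) atTop (𝓝 (∫ x, h x ∂m0)))
    (K : NNReal) (ε : ℝ) (hε : 0 < ε) :
    ∀ᶠ n in atTop, ∀ g : X → ℝ, LipschitzWith K g → (∀ x, |g x| ≤ 1) →
      |∫ x, g x ∂(m n) - ∫ x, g x ∂m0| < ε := by
  have hmass : Tendsto (fun n => (m n).real Set.univ) atTop (𝓝 (m0.real Set.univ)) := by
    simpa using hw (fun _ => 1) continuous_const ⟨1, by simp⟩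
  set A := m0.real Set.univ with hA
  have hA0 : 0 ≤ A := measureReal_nonneg
  obtain ⟨η, hη, hηK⟩ : ∃ η : ℝ, 0 < η ∧ K * η * (A + 1) ≤ ε / 8 := by
    refine ⟨ε / (8 * (K + 1) * (A + 1)), by positivity, ?_⟩
    have : (0:ℝ) ≤ K := K.2
    rw [show (K:ℝ) * (ε / (8 * (K + 1) * (A + 1))) * (A + 1) = (K / (K + 1)) * (ε / 8) by
      field_simp]
    refine mul_le_of_le_one_left (by positivity) ?_
    rw [div_le_one (by positivity)]; linarith
  let y := TopologicalSpace.denseSeq X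
  let φ : ℕ → X → ℝ := fun j x => max 0 (η - dist x (y j))
  have hφc : ∀ j, Continuous (φ j) := fun j => by fun_prop
  have hφ0 : ∀ j x, 0 ≤ φ j x := fun j x => le_max_left _ _
  let Φ : ℕ → X → ℝ := fun N x => ∑ j ∈ Finset.range N, φ j x
  have hΦc : ∀ N, Continuous (Φ N) := fun N => continuous_finsetSum _ fun j _ => hφc j
  have hΦ0 : ∀ N x, 0 ≤ Φ N x := fun N x => Finset.sum_nonneg fun j _ => hφ0 j x
  let p : ℕ → ℕ → X → ℝ := fun N j x => φ j x / (Φ N x + 1 / ((N:ℝ) + 1))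
  have hden : ∀ (N : ℕ) x, 0 < Φ N x + 1 / ((N:ℝ) + 1) := fun N x => by
    have := hΦ0 N x; positivity
  have hpc : ∀ N j, Continuous (p N j) := fun N j =>
    (hφc j).div ((hΦc N).add continuous_const) fun x => (hden N x).ne'
  have hp0 : ∀ N j x, 0 ≤ p N j x := fun N j x => div_nonneg (hφ0 j x) (hden N x).le
  have hP : ∀ N x, 1 - ∑ j ∈ Finset.range N, p N j x
      = (1 / ((N:ℝ) + 1)) / (Φ N x + 1 / ((N:ℝ) + 1)) := fun N x => by
    have h1 : ∑ j ∈ Finset.range N, p N j x = Φ N x / (Φ N x + 1 / ((N:ℝ) + 1)) := by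
      simp only [p, Φ, Finset.sum_div]
    rw [h1, eq_div_iff (hden N x).ne', sub_mul, div_mul_cancel₀ _ (hden N x).ne']
    ring
  have hR0 : ∀ N x, 0 ≤ 1 - ∑ j ∈ Finset.range N, p N j x := fun N x => by
    rw [hP]; exact div_nonneg (by positivity) (hden N x).le
  have hps : ∀ N x, ∑ j ∈ Finset.range N, p N j x ≤ 1 := fun N x => by
    linarith [hR0 N x]
  have hps0 : ∀ N x, 0 ≤ ∑ j ∈ Finset.range N, p N j x := fun N x =>
    Finset.sum_nonneg fun j _ => hp0 N j x
  have hp1 : ∀ N j x, p N j x ≤ η * (N + 1) := fun N j x => by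
    rw [div_le_iff₀ (hden N x)]
    have h1 : φ j x ≤ η := max_le hη.le (by linarith [dist_nonneg (x := x) (y := y j)])
    have h2 : η * ((N:ℝ) + 1) * (1 / ((N:ℝ) + 1)) = η := by field_simp
    have h3 : 0 ≤ η * ((N:ℝ) + 1) * Φ N x := mul_nonneg (by positivity) (hΦ0 N x)
    rw [mul_add, h2]; linarith
  have hpd : ∀ N j x, η ≤ dist x (y j) → p N j x = 0 := fun N j x h => by
    have : φ j x = 0 := max_eq_left (by linarith)
    simp [p, this]
  have hRc : ∀ N, Continuous fun x => 1 - ∑ j ∈ Finset.range N, p N j x := fun N =>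
    continuous_const.sub (continuous_finsetSum _ fun j _ => hpc N j)
  have hRb : ∀ N x, |1 - ∑ j ∈ Finset.range N, p N j x| ≤ 1 := fun N x => by
    rw [abs_of_nonneg (hR0 N x)]; linarith [hps0 N x]
  have hlim : Tendsto (fun N => ∫ x, (1 - ∑ j ∈ Finset.range N, p N j x) ∂m0) atTop (𝓝 0) := by
    have : Tendsto (fun N => ∫ x, (1 - ∑ j ∈ Finset.range N, p N j x) ∂m0) atTop
        (𝓝 (∫ _, (0:ℝ) ∂m0)) := by
      refine tendsto_integral_of_dominated_convergence (fun _ => 1)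
        (fun N => (hRc N).measurable.aestronglyMeasurable) (integrable_const _)
        (fun N => Eventually.of_forall fun x => by simpa using hRb N x)
        (Eventually.of_forall fun x => ?_)
      obtain ⟨j, hj⟩ : ∃ j, dist x (y j) < η :=
        (TopologicalSpace.denseRange_denseSeq X).exists_dist_lt x hη
      have hφp : 0 < φ j x := lt_max_of_lt_right (by linarith)
      have h1 : Tendsto (fun N : ℕ => (1 / ((N:ℝ) + 1)) / φ j x) atTop (𝓝 0) := by
        simpa using tendsto_one_div_add_atTop_nhds_zero_nat.div_const (φ j x)
      refine squeeze_zero' (Eventually.of_forall fun N => hR0 N x) ?_ h1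
      filter_upwards [eventually_gt_atTop j] with N hN
      rw [hP]
      refine div_le_div_of_nonneg_left (by positivity) hφp ?_
      have : φ j x ≤ Φ N x :=
        Finset.single_le_sum (f := fun j => φ j x) (fun i _ => hφ0 i x) (Finset.mem_range.2 hN)
      have : 0 ≤ 1 / ((N:ℝ) + 1) := by positivity
      linarith
    simpa using this
  obtain ⟨N, hN⟩ := ((tendsto_order.1 hlim).2 (ε / 8) (by positivity)).exists
  have hwN := hw _ (hRc N) ⟨1, hRb N⟩
  have hsum : Tendsto (fun n => ∑ j ∈ Finset.range N, |∫ x, p N j x ∂(m n) - ∫ x, p N j x ∂m0|)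
      atTop (𝓝 0) := by
    have : Tendsto (fun n => ∑ j ∈ Finset.range N,
        |∫ x, p N j x ∂(m n) - ∫ x, p N j x ∂m0|)
        atTop (𝓝 (∑ j ∈ Finset.range N, |∫ x, p N j x ∂m0 - ∫ x, p N j x ∂m0|)) := by
      refine tendsto_finsetSum _ fun j _ => ?_
      refine ((hw _ (hpc N j) ⟨η * (N + 1), fun x => ?_⟩).sub_const _).abs
      · rw [abs_of_nonneg (hp0 N j x)]; exact hp1 N j x
    simpa using this
  filter_upwards [(tendsto_order.1 hwN).2 _ hN, (tendsto_order.1 hsum).2 (ε / 8) (by positivity),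
    (tendsto_order.1 hmass).2 (A + 1) (by linarith)] with n h1 h2 h3 g hg hg1
  have q1 := aux_part (m n) K η hη N y (p N) (hpc N) (hp0 N) (hps N) (hp1 N) (hpd N) g hg hg1
  have q2 := aux_part m0 K η hη N y (p N) (hpc N) (hp0 N) (hps N) (hp1 N) (hpd N) g hg hg1
  have hK : (0:ℝ) ≤ K * η := mul_nonneg K.2 hη.le
  have q3 : K * η * (m n).real Set.univ ≤ ε / 8 :=
    (mul_le_mul_of_nonneg_left h3.le hK).trans hηK
  have q4 : K * η * m0.real Set.univ ≤ ε / 8 :=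
    (mul_le_mul_of_nonneg_left (by linarith) hK).trans hηK
  have q5 : |∑ j ∈ Finset.range N, g (y j) * ∫ x, p N j x ∂(m n)
      - ∑ j ∈ Finset.range N, g (y j) * ∫ x, p N j x ∂m0| ≤ ε / 8 := by
    rw [← Finset.sum_sub_distrib]
    refine ((Finset.abs_sum_le_sum_abs _ _).trans (Finset.sum_le_sum fun j _ => ?_)).trans h2.le
    rw [← mul_sub, abs_mul]
    exact mul_le_of_le_one_left (abs_nonneg _) (hg1 _)
  rw [abs_le] at q1 q2 q5
  rw [abs_lt]
  constructor <;> linarith [q1.1, q1.2, q2.1, q2.2, q5.1, q5.2]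

lemma aux_restrict {X : Type*} [PseudoMetricSpace X] [MeasurableSpace X] [BorelSpace X]
    (x0 : X) (M : ℕ → Measure X) [∀ n, IsFiniteMeasure (M n)] (μ : Measure X)
    (hμFin : ∀ ρ > (0 : ℝ), μ {x | ρ ≤ dist x0 x} ≠ ⊤)
    (hRV : ∀ h : X → ℝ, Continuous h → (∃ C, ∀ x, |h x| ≤ C) →
      (∃ ρ > (0 : ℝ), ∀ x, dist x0 x < ρ → h x = 0) →
      Tendsto (fun n : ℕ => ∫ x, h x ∂(M n)) atTop (𝓝 (∫ x, h x ∂μ)))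
    (r : ℝ) (hr : 0 < r) (hrcont : μ {x | dist x0 x = r} = 0)
    (h : X → ℝ) (hc : Continuous h) (hb : ∃ C, ∀ x, |h x| ≤ C) :
    Tendsto (fun n : ℕ => ∫ x in {x | r ≤ dist x0 x}, h x ∂(M n)) atTop
      (𝓝 (∫ x in {x | r ≤ dist x0 x}, h x ∂μ)) := by
  obtain ⟨C, hC⟩ := hb
  have hC0 : 0 ≤ C := (abs_nonneg _).trans (hC x0)
  have hSm : ∀ ρ : ℝ, MeasurableSet {x | ρ ≤ dist x0 x} := fun ρ =>
    (isClosed_le continuous_const (by fun_prop)).measurableSet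
  let c : ℝ → ℝ := fun s => max 0 (min 1 s)
  have hcc : Continuous c := by fun_prop
  have c0 : ∀ s, 0 ≤ c s := fun s => le_max_left _ _
  have c1 : ∀ s, c s ≤ 1 := fun s => max_le zero_le_one (min_le_left _ _)
  have cz : ∀ s, s ≤ 0 → c s = 0 := fun s hs => max_eq_left ((min_le_right _ _).trans hs)
  have co : ∀ s, 1 ≤ s → c s = 1 := fun s hs => by simp [c, min_eq_left hs]
  have cm : Monotone c := fun s t hst => max_le_max le_rfl (min_le_min le_rfl hst)
  let δ : ℕ → ℝ := fun k => (r / 2) / ((k:ℝ) + 1)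
  have hδ : ∀ k, 0 < δ k := fun k => by positivity
  have hδr : ∀ k, δ k ≤ r / 2 := fun k => div_le_self (by positivity) (by
    have : (0:ℝ) ≤ k := by positivity
    linarith)
  have hδ0 : Tendsto δ atTop (𝓝 0) := by
    have := (tendsto_one_div_add_atTop_nhds_zero_nat (𝕜 := ℝ)).const_mul (r / 2)
    simpa [δ, mul_one_div, div_eq_mul_inv] using this
  let cp : ℕ → X → ℝ := fun k x => c ((dist x0 x - r) / δ k + 1)
  let cn : ℕ → X → ℝ := fun k x => c ((dist x0 x - r) / δ k)
  have hcpc : ∀ k, Continuous (cp k) := fun k => by fun_prop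
  have hcnc : ∀ k, Continuous (cn k) := fun k => by fun_prop
  have hle : ∀ k x, cn k x ≤ cp k x := fun k x => cm (by linarith)
  have hpz : ∀ k x, dist x0 x < r / 2 → cp k x = 0 := fun k x hx => cz _ (by
    have : (dist x0 x - r) / δ k ≤ -1 := by
      rw [div_le_iff₀ (hδ k)]; linarith [hδr k]
    linarith)
  have hnz : ∀ k x, dist x0 x ≤ r → cn k x = 0 := fun k x hx => cz _
    (div_nonpos_of_nonpos_of_nonneg (by linarith) (hδ k).le)
  have hpo : ∀ k x, r ≤ dist x0 x → cp k x = 1 := fun k x hx => co _ (by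
    have : 0 ≤ (dist x0 x - r) / δ k := div_nonneg (by linarith) (hδ k).le
    linarith)
  let D : ℕ → X → ℝ := fun k x => cp k x - cn k x
  have hDc : ∀ k, Continuous (D k) := fun k => (hcpc k).sub (hcnc k)
  have hD0 : ∀ k x, 0 ≤ D k x := fun k x => sub_nonneg.2 (hle k x)
  have hD1 : ∀ k x, D k x ≤ 1 := fun k x => by
    have := c1 ((dist x0 x - r) / δ k + 1); have := c0 ((dist x0 x - r) / δ k)
    simp only [D, cp, cn]; linarith
  have hDz : ∀ k x, dist x0 x < r / 2 → D k x = 0 := fun k x hx => by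
    simp only [D]; rw [hpz k x hx, hnz k x (by linarith)]; simp
  have hindi : ∀ ρ > (0:ℝ), Integrable (Set.indicator {x | ρ ≤ dist x0 x} fun _ => (1:ℝ)) μ :=
    fun ρ hρ => by
      rw [integrable_indicator_iff (hSm ρ)]
      exact integrableOn_const (hμFin ρ hρ)
  -- integrability of functions supported away from the origin
  have hint : ∀ (u : X → ℝ) (B : ℝ), Measurable u → (∀ x, |u x| ≤ B) →
      (∀ x, dist x0 x < r / 2 → u x = 0) → Integrable u μ := fun u B hu hB hz => by
    refine ((hindi (r / 2) (by positivity)).const_mul B).mono' hu.aestronglyMeasurable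
      (Eventually.of_forall fun x => ?_)
    by_cases hx : r / 2 ≤ dist x0 x
    · simpa [Set.indicator, hx] using hB x
    · simp [Set.indicator, hx, hz x (not_le.1 hx)]
  have hDlim : Tendsto (fun k => ∫ x, D k x ∂μ) atTop (𝓝 0) := by
    have : Tendsto (fun k => ∫ x, D k x ∂μ) atTop (𝓝 (∫ _, (0:ℝ) ∂μ)) := by
      refine tendsto_integral_of_dominated_convergence
        (Set.indicator {x | r / 2 ≤ dist x0 x} fun _ => (1:ℝ))
        (fun N => (hDc N).measurable.aestronglyMeasurable) (hindi _ (by positivity))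
        (fun N => Eventually.of_forall fun x => ?_) ?_
      · by_cases hx : r / 2 ≤ dist x0 x
        · simpa [Set.indicator, hx, abs_of_nonneg (hD0 N x)] using hD1 N x
        · simp [Set.indicator, hx, hDz N x (not_le.1 hx)]
      · have : ∀ᵐ x ∂μ, dist x0 x ≠ r := by
          rw [ae_iff]; simpa using hrcont
        filter_upwards [this] with x hx
        refine tendsto_const_nhds.congr' ?_
        rcases lt_or_gt_of_ne hx with hx | hx
        · filter_upwards [(tendsto_order.1 hδ0).2 (r - dist x0 x) (by linarith)] with k hk
          simp only [D]
          rw [hnz k x hx.le, show cp k x = 0 from cz _ ?_]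
          · simp
          · have : (dist x0 x - r) / δ k ≤ -1 := by
              rw [div_le_iff₀ (hδ k)]; linarith
            linarith
        · filter_upwards [(tendsto_order.1 hδ0).2 (dist x0 x - r) (by linarith)] with k hk
          simp only [D]
          rw [hpo k x hx.le, show cn k x = 1 from co _ ?_]
          · simp
          · rw [le_div_iff₀ (hδ k)]; linarith
    simpa using this
  -- the comparison inequality
  have hcmp : ∀ (m : Measure X), (∀ (u : X → ℝ) (B : ℝ), Measurable u → (∀ x, |u x| ≤ B) →
      (∀ x, dist x0 x < r / 2 → u x = 0) → Integrable u m) → ∀ k,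
      |∫ x in {x | r ≤ dist x0 x}, h x ∂m - ∫ x, cp k x * h x ∂m| ≤ C * ∫ x, D k x ∂m := by
    intro m hm k
    rw [← integral_indicator (hSm r)]
    have i1 : Integrable (Set.indicator {x | r ≤ dist x0 x} h) m := by
      refine hm _ C (hc.measurable.indicator (hSm r)) (fun x => ?_) (fun x hx => ?_)
      · by_cases hx : r ≤ dist x0 x
        · simpa [Set.indicator, hx] using hC x
        · simpa [Set.indicator, hx] using hC0
      · exact Set.indicator_of_notMem (by simp; linarith) _
    have i2 : Integrable (fun x => cp k x * h x) m := by
      refine hm _ C ((hcpc k).mul hc).measurable (fun x => ?_) (fun x hx => ?_)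
      · rw [abs_mul, abs_of_nonneg (c0 _)]
        exact (mul_le_of_le_one_left (abs_nonneg _) (c1 _)).trans (hC x)
      · rw [hpz k x hx, zero_mul]
    have i3 : Integrable (D k) m := hm _ 1 (hDc k).measurable
      (fun x => by rw [abs_of_nonneg (hD0 k x)]; exact hD1 k x) (hDz k)
    rw [← integral_sub i1 i2, ← integral_const_mul]
    refine abs_integral_le_integral_abs.trans (integral_mono (i1.sub i2).abs (i3.const_mul C) ?_)
    intro x
    change |Set.indicator {x | r ≤ dist x0 x} h x - cp k x * h x| ≤ C * D k x
    by_cases hx : r ≤ dist x0 x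
    · rw [Set.indicator_of_mem (by exact hx), hpo k x hx]
      simpa using mul_nonneg hC0 (hD0 k x)
    · rw [Set.indicator_of_notMem (by exact hx)]
      simp only [D]
      rw [hnz k x (not_le.1 hx).le, zero_sub, abs_neg, abs_mul, abs_of_nonneg (c0 _), sub_zero,
        mul_comm]
      exact mul_le_mul_of_nonneg_right (hC x) (c0 _)
  rw [Metric.tendsto_atTop']
  intro ε hε
  have hC1 : 0 < C + 1 := by linarith
  obtain ⟨k, hk⟩ := ((tendsto_order.1 hDlim).2 (ε / (3 * (C + 1))) (by positivity)).exists
  have hv1 := hRV (D k) (hDc k) ⟨1, fun x => by rw [abs_of_nonneg (hD0 k x)]; exact hD1 k x⟩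
    ⟨r / 2, by positivity, hDz k⟩
  have hv2 := hRV (fun x => cp k x * h x) ((hcpc k).mul hc)
    ⟨C, fun x => by
      rw [abs_mul, abs_of_nonneg (c0 _)]
      exact (mul_le_of_le_one_left (abs_nonneg _) (c1 _)).trans (hC x)⟩
    ⟨r / 2, by positivity, fun x hx => by rw [hpz k x hx, zero_mul]⟩
  have hsmall : ∀ s : ℝ, 0 ≤ s → s < ε / (3 * (C + 1)) → C * s < ε / 3 := fun s hs0 hs => by
    rw [lt_div_iff₀ (by positivity)] at hs
    nlinarith
  have hev : ∀ᶠ n in atTop, dist (∫ x in {x | r ≤ dist x0 x}, h x ∂(M n))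
      (∫ x in {x | r ≤ dist x0 x}, h x ∂μ) < ε := by
    filter_upwards [(tendsto_order.1 hv1).2 _ hk, Metric.tendsto_nhds.1 hv2 (ε / 3) (by positivity)]
      with n h1 h2
    have q1 := hcmp (M n) (fun u B hu hB _ => Integrable.of_bound hu.aestronglyMeasurable B
      (Eventually.of_forall fun x => by simpa using hB x)) k
    have q2 := hcmp μ hint k
    have s1 := hsmall _ (integral_nonneg (hD0 k)) h1
    have s2 := hsmall _ (integral_nonneg (hD0 k)) hk
    rw [Real.dist_eq] at h2 ⊢
    rw [abs_lt] at h2 ⊢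
    rw [abs_le] at q1 q2
    constructor <;> linarith [q1.1, q1.2, q2.1, q2.2, h2.1, h2.2]
  obtain ⟨n, hn⟩ := eventually_atTop.1 hev
  exact ⟨n, fun j hj => hn j hj.le⟩

lemma aux_pi_mono {ι : Type*} [Fintype ι] {X : Type*} [MeasurableSpace X] (m m' : Measure X)
    (h : m ≤ m') :
    (Measure.pi fun _ : ι => m) ≤ Measure.pi fun _ : ι => m' := by
  refine Measure.le_intro fun s hs _ => ?_
  rw [Measure.pi, Measure.pi, toMeasure_apply _ _ hs, toMeasure_apply _ _ hs]
  revert s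
  suffices H : OuterMeasure.pi (fun _ : ι => m.toOuterMeasure)
      ≤ OuterMeasure.pi (fun _ : ι => m'.toOuterMeasure) from fun s _ _ => H s
  rw [OuterMeasure.le_pi]
  intro s hs
  refine (OuterMeasure.pi_pi_le _ _).trans ?_
  exact Finset.prod_le_prod' fun i _ => h _

lemma aux_pi_restrict {ι : Type*} [Fintype ι] {X : Type*} [MeasurableSpace X] (m : Measure X)
    (S : Set X) (hS : MeasurableSet S) (hfin : m S ≠ ⊤) :
    (Measure.pi fun _ : ι => m).restrict {x | ∀ i, x i ∈ S}
      = Measure.pi fun _ : ι => m.restrict S := by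
  haveI : IsFiniteMeasure (m.restrict S) := ⟨by simpa using hfin.lt_top⟩
  symm
  refine Measure.pi_eq fun s hs => ?_
  rw [Measure.restrict_apply (MeasurableSet.univ_pi hs)]
  have e : Set.univ.pi s ∩ {x : ι → X | ∀ i, x i ∈ S} = Set.univ.pi fun i => s i ∩ S := by
    ext x; simp [Set.mem_pi, forall_and]
  rw [e]
  simp only [Measure.restrict_apply (hs _)]
  apply le_antisymm
  · rw [Measure.pi, toMeasure_apply _ _ (MeasurableSet.univ_pi fun i => (hs i).inter hS)]
    exact OuterMeasure.pi_pi_le _ _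
  · refine le_trans (le_of_eq ?_) (aux_pi_mono (m.restrict S) m Measure.restrict_le_self _)
    rw [Measure.pi_pi]
    refine Finset.prod_congr rfl fun i _ => ?_
    rw [Measure.restrict_apply ((hs i).inter hS), Set.inter_assoc, Set.inter_self]

lemma aux_prod {k : ℕ} {T : Type*} {X : Type*} [MeasurableSpace X] (m : Measure X)
    (S : Set X) (hS : MeasurableSet S) (hfin : m S ≠ ⊤) (f : T × X → ℝ)
    (t : Fin (k + 1) → T) :
    ∫ x : Fin (k + 1) → X in {x | ∀ i, x i ∈ S},
          Real.exp (-∑ i, f (t i, x i)) ∂(Measure.pi fun _ : Fin (k + 1) => m)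
      = ∏ i, ∫ x in S, Real.exp (-f (t i, x)) ∂m := by
  haveI : IsFiniteMeasure (m.restrict S) := ⟨by simpa using hfin.lt_top⟩
  rw [aux_pi_restrict m S hS hfin]
  rw [← integral_fintype_prod_eq_prod (𝕜 := ℝ) (fun i x => Real.exp (-f (t i, x)))]
  simp [← Finset.sum_neg_distrib, Real.exp_sum]

lemma aux_prod_unif {T : Type*} (F : ℕ → T → ℝ) (G : T → ℝ) (B : ℝ) 
    (hF : ∀ n t, |F n t| ≤ B) (hG : ∀ t, |G t| ≤ B)
    (hu : ∀ ε > 0, ∀ᶠ n in atTop, ∀ t, |F n t - G t| < ε) {ι : Type*} (s : Finset ι) :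
    ∀ ε > 0, ∀ᶠ n in atTop, ∀ t : ι → T, |∏ i ∈ s, F n (t i) - ∏ i ∈ s, G (t i)| < ε := by
  classical
  induction s using Finset.induction_on with
  | empty => intro ε hε; simp [hε]
  | insert j s hj ih =>
    intro ε hε
    have hBB : 0 ≤ |B| := abs_nonneg _
    have hb : 0 < |B| ^ s.card + 1 := by positivity
    filter_upwards [ih (ε / (2 * (|B| + 1))) (by positivity),
      hu (ε / (2 * (|B| ^ s.card + 1))) (by positivity)] with n h1 h2 t
    rw [Finset.prod_insert hj, Finset.prod_insert hj]
    have e : F n (t j) * ∏ i ∈ s, F n (t i) - G (t j) * ∏ i ∈ s, G (t i)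
      = F n (t j) * (∏ i ∈ s, F n (t i) - ∏ i ∈ s, G (t i))
        + (F n (t j) - G (t j)) * ∏ i ∈ s, G (t i) := by ring
    rw [e]
    have hp : |∏ i ∈ s, G (t i)| ≤ |B| ^ s.card := by
      rw [Finset.abs_prod]
      refine (Finset.prod_le_prod (fun i _ => abs_nonneg _)
        fun i _ => (hG (t i)).trans (le_abs_self B)).trans ?_
      simp
    have a1 : |F n (t j) * (∏ i ∈ s, F n (t i) - ∏ i ∈ s, G (t i))| < ε / 2 := by
      rw [abs_mul]
      have := h1 t
      rw [lt_div_iff₀ (by positivity)] at this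
      nlinarith [(hF n (t j)).trans (le_abs_self B),
        abs_nonneg (∏ i ∈ s, F n (t i) - ∏ i ∈ s, G (t i))]
    have a2 : |(F n (t j) - G (t j)) * ∏ i ∈ s, G (t i)| < ε / 2 := by
      rw [abs_mul]
      have := h2 (t j)
      rw [lt_div_iff₀ (by positivity)] at this
      rcases (abs_nonneg (F n (t j) - G (t j))).eq_or_lt with h | h
      · rw [← h]; simp [hε]
      · nlinarith
    exact (abs_add_le _ _).trans_lt (by linarith)

/-- Uniform convergence and uniform boundedness of `L_{k+1,n} f`
(Lemma 5.7 of the paper). -/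
theorem stmt_9
    {T : Type*} [MetricSpace T] [CompleteSpace T] [TopologicalSpace.SeparableSpace T]
    [LocallyCompactSpace T]
    {X : Type*} [MetricSpace X] [CompleteSpace X] [TopologicalSpace.SeparableSpace X]
    [MeasurableSpace X] [BorelSpace X]
    (x0 : X) (σ : ℝ → X → X)
    (hσc : ContinuousOn (fun p : ℝ × X => σ p.1 p.2) (Set.Ioi (0 : ℝ) ×ˢ Set.univ))
    (hσ1 : ∀ x, σ 1 x = x)
    (hσm : ∀ u v : ℝ, 0 < u → 0 < v → ∀ x, σ u (σ v x) = σ (u * v) x)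
    (hσ0 : ∀ u : ℝ, 0 < u → σ u x0 = x0)
    (ν : Measure X) [IsProbabilityMeasure ν] (hν0 : ν {x0} = 0)
    (a : ℕ → ℝ) (ha : ∀ n, 0 < a n) (haTop : Tendsto a atTop atTop)
    (μ : Measure X) (hμ0 : μ ≠ 0)
    (hμFin : ∀ ρ > (0 : ℝ), μ {x | ρ ≤ dist x0 x} ≠ ⊤)
    (hRV : ∀ h : X → ℝ, Continuous h → (∃ C, ∀ x, |h x| ≤ C) →
      (∃ ρ > (0 : ℝ), ∀ x, dist x0 x < ρ → h x = 0) →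
      Tendsto (fun n : ℕ => (n : ℝ) * ∫ x, h (σ (a n)⁻¹ x) ∂ν) atTop (𝓝 (∫ x, h x ∂μ)))
    (k : ℕ) (r : ℝ) (hr : 0 < r) (hrcont : μ {x | dist x0 x = r} = 0)
    (f : T × X → ℝ) (hf0 : ∀ z, 0 ≤ f z) (hfb : ∃ C, ∀ z, f z ≤ C)
    (hfLip : ∃ K : NNReal, LipschitzWith K f)
    (hfvan : ∀ t x, dist x0 x < r → f (t, x) = 0) :
    TendstoUniformly
      (fun n : ℕ => fun t : Fin (k + 1) → T =>
        ∫ x : Fin (k + 1) → X in {x | ∀ i, r ≤ dist x0 (x i)},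
          Real.exp (-∑ i, f (t i, x i))
          ∂(Measure.pi fun _ : Fin (k + 1) =>
              (n : ENNReal) • Measure.map (fun x => σ (a n)⁻¹ x) ν))
      (fun t : Fin (k + 1) → T =>
        ∫ x : Fin (k + 1) → X in {x | ∀ i, r ≤ dist x0 (x i)},
          Real.exp (-∑ i, f (t i, x i)) ∂(Measure.pi fun _ : Fin (k + 1) => μ))
      atTop
    ∧ ∃ C : ℝ, ∀ (n : ℕ) (t : Fin (k + 1) → T),
        |∫ x : Fin (k + 1) → X in {x | ∀ i, r ≤ dist x0 (x i)},
            Real.exp (-∑ i, f (t i, x i))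
            ∂(Measure.pi fun _ : Fin (k + 1) =>
                (n : ENNReal) • Measure.map (fun x => σ (a n)⁻¹ x) ν)| ≤ C := by
  obtain ⟨K, hK⟩ := hfLip
  haveI : Nonempty X := ⟨x0⟩
  have hσcont : ∀ n, Continuous (σ (a n)⁻¹) := fun n => by
    have h1 : Continuous fun x : X => ((a n)⁻¹, x) := by fun_prop
    exact hσc.comp_continuous h1 fun x => ⟨inv_pos.2 (ha n), trivial⟩
  set M : ℕ → Measure X := fun n => (n : ENNReal) • Measure.map (fun x => σ (a n)⁻¹ x) ν with hM
  haveI hMf : ∀ n, IsFiniteMeasure (M n) := fun n => by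
    refine ⟨?_⟩
    simp only [hM, Measure.smul_apply, smul_eq_mul]
    exact ENNReal.mul_lt_top (ENNReal.natCast_lt_top n) (measure_lt_top _ _)
  have hRV' : ∀ h : X → ℝ, Continuous h → (∃ C, ∀ x, |h x| ≤ C) →
      (∃ ρ > (0 : ℝ), ∀ x, dist x0 x < ρ → h x = 0) →
      Tendsto (fun n : ℕ => ∫ x, h x ∂(M n)) atTop (𝓝 (∫ x, h x ∂μ)) := by
    intro h hc hb hz
    refine (hRV h hc hb hz).congr fun n => ?_
    simp only [hM]
    rw [integral_smul_measure, integral_map (hσcont n).measurable.aemeasurable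
      hc.measurable.aestronglyMeasurable]
    simp
  let S : Set X := {x | r ≤ dist x0 x}
  have hS : MeasurableSet S := (isClosed_le continuous_const (by fun_prop)).measurableSet
  haveI : IsFiniteMeasure (μ.restrict S) := ⟨by simpa using (hμFin r hr).lt_top⟩
  have hw : ∀ h : X → ℝ, Continuous h → (∃ C, ∀ x, |h x| ≤ C) →
      Tendsto (fun n => ∫ x, h x ∂((M n).restrict S)) atTop (𝓝 (∫ x, h x ∂(μ.restrict S))) :=
    fun h hc hb => aux_restrict x0 M μ hμFin hRV' r hr hrcont h hc hb
  have hmass : Tendsto (fun n => ((M n).restrict S).real Set.univ) atTop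
      (𝓝 ((μ.restrict S).real Set.univ)) := by
    have := hw (fun _ => 1) continuous_const ⟨1, by simp⟩
    simpa only [integral_const, smul_eq_mul, mul_one] using this
  obtain ⟨B0, hB0⟩ := hmass.bddAbove_range
  have hB0' : ∀ n, ((M n).restrict S).real Set.univ ≤ B0 := fun n => hB0 ⟨n, rfl⟩
  let B := max B0 ((μ.restrict S).real Set.univ)
  have hexp0 : ∀ z, 0 ≤ Real.exp (-f z) := fun z => (Real.exp_pos _).le
  have hexp1 : ∀ z, Real.exp (-f z) ≤ 1 := fun z => Real.exp_le_one_iff.2 (by linarith [hf0 z])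
  have hbd : ∀ (m : Measure X) [IsFiniteMeasure m] (t : T),
      |∫ x, Real.exp (-f (t, x)) ∂m| ≤ m.real Set.univ := fun m _ t => by
    have := norm_integral_le_of_norm_le_const (μ := m) (f := fun x => Real.exp (-f (t, x))) (C := 1)
      (Eventually.of_forall fun x => by simpa using hf0 (t, x))
    simpa using this
  have hLip : ∀ t : T, LipschitzWith K fun x => Real.exp (-f (t, x)) := fun t => by
    refine LipschitzWith.of_dist_le_mul fun x x' => ?_
    have h1 : dist (f (t, x)) (f (t, x')) ≤ K * dist x x' := by
      refine (hK.dist_le_mul _ _).trans (le_of_eq ?_)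
      rw [Prod.dist_eq]; simp
    refine le_trans ?_ h1
    rw [Real.dist_eq, Real.dist_eq]
    have key : ∀ u v : ℝ, 0 ≤ u → u ≤ v → |Real.exp (-u) - Real.exp (-v)| ≤ v - u := by
      intro u v hu huv
      have q1 : Real.exp (-v) ≤ Real.exp (-u) := Real.exp_le_exp.2 (by linarith)
      rw [abs_of_nonneg (by linarith)]
      have q2 : Real.exp (-v) = Real.exp (-u) * Real.exp (-(v - u)) := by
        rw [← Real.exp_add]; ring_nf
      have q3 := Real.add_one_le_exp (-(v - u))
      have q4 : Real.exp (-u) ≤ 1 := Real.exp_le_one_iff.2 (by linarith)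
      have q5 := Real.exp_pos (-u)
      rw [q2]
      nlinarith
    rcases le_total (f (t, x)) (f (t, x')) with h | h
    · rw [abs_sub_comm (f (t, x)), abs_of_nonneg (sub_nonneg.2 h)]
      exact key _ _ (hf0 _) h
    · rw [abs_of_nonneg (sub_nonneg.2 h), abs_sub_comm]
      exact key _ _ (hf0 _) h
  have hF : ∀ n t, |∫ x in S, Real.exp (-f (t, x)) ∂(M n)| ≤ B := fun n t =>
    (hbd _ t).trans ((hB0' n).trans (le_max_left _ _))
  have hG : ∀ t, |∫ x in S, Real.exp (-f (t, x)) ∂μ| ≤ B := fun t =>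
    (hbd _ t).trans (le_max_right _ _)
  have e1 : ∀ n (t : Fin (k + 1) → T), ∫ x : Fin (k + 1) → X in {x | ∀ i, r ≤ dist x0 (x i)},
      Real.exp (-∑ i, f (t i, x i)) ∂(Measure.pi fun _ : Fin (k + 1) => M n)
      = ∏ i, ∫ x in S, Real.exp (-f (t i, x)) ∂(M n) := fun n t =>
    aux_prod (M n) S hS (measure_ne_top _ _) f t
  have e2 : ∀ (t : Fin (k + 1) → T), ∫ x : Fin (k + 1) → X in {x | ∀ i, r ≤ dist x0 (x i)},
      Real.exp (-∑ i, f (t i, x i)) ∂(Measure.pi fun _ : Fin (k + 1) => μ)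
      = ∏ i, ∫ x in S, Real.exp (-f (t i, x)) ∂μ := fun t =>
    aux_prod μ S hS (hμFin r hr) f t
  constructor
  · rw [Metric.tendstoUniformly_iff]
    intro ε hε
    have hu : ∀ ε > 0, ∀ᶠ n in atTop, ∀ t : T, |∫ x in S, Real.exp (-f (t, x)) ∂(M n)
        - ∫ x in S, Real.exp (-f (t, x)) ∂μ| < ε := fun ε hε => by
      filter_upwards [aux_unif (fun n => (M n).restrict S) (μ.restrict S) hw K ε hε] with n hn t
      exact hn _ (hLip t) fun x => by rw [abs_of_nonneg (hexp0 _)]; exact hexp1 _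
    filter_upwards [aux_prod_unif _ _ B hF hG hu (Finset.univ : Finset (Fin (k + 1))) ε hε]
      with n hn t
    rw [e1, e2, dist_comm, Real.dist_eq]
    exact hn t
  · refine ⟨B ^ (k + 1), fun n t => ?_⟩
    rw [e1, Finset.abs_prod]
    refine le_trans (Finset.prod_le_prod (fun i _ => abs_nonneg _) fun i _ => hF n (t i)) ?_
    simp
end

section
/- Let k ≥ 0 be an integer. Let N be an ℕ-valued random variable with E[N^{k+1}] < ∞ and P(N ≥ k+1) > 0, let T_1,T_2,… be 𝒯-valued random elements (with arbitrary joint distribution together with N), and let X_1,X_2,… be i.i.d. 𝒳-valued random elements with law ν, with (X_i)_{i≥1} independent of (N,(T_i)_{i≥1}). Assume ν is a Borel probability measure on 𝒳 with ν({0}) = 0 that is regularly varying with scaling sequence (a_n) and limit measure μ. Let r > 0 satisfy μ({x : d(0,x) = r}) = 0 and let f : 𝒯×𝒳 → [0,∞) be bounded continuous with f(t,x) = 0 whenever d(0,x) < r. Then n^{k+1}·E[exp(−Σ_{i=1}^{N} f(T_i, a_n⁻¹•X_i))·1{#{1 ≤ i ≤ N : d(0, a_n⁻¹•X_i) ≥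 r} ≥ k+1}] → (1/(k+1)!)·E[Σ_{1 ≤ i_1,…,i_{k+1} ≤ N, pairwise distinct} ∏_{j=1}^{k+1} ∫_{{x : d(0,x) ≥ r}} e^{−f(T_{i_j},x)} μ(dx)] as n → ∞. -/
open MeasureTheory Filter Metric Topology

lemma aux_expand {ι : Type*} [DecidableEq ι] (s : Finset ι) (m : ℕ) (A : ι → Prop) [DecidablePred A]
    (g : ι → ℝ) (hg : ∀ i, ¬ A i → g i = 0) :
    (if m ≤ (s.filter A).card then Real.exp (-∑ i ∈ s, g i) else 0)
     = ∑ S ∈ s.powerset.filter (fun S => m ≤ S.card),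
        ∏ i ∈ s, (if i ∈ S then (if A i then Real.exp (-g i) else 0) else (if A i then 0 else 1)) := by
  have key : ∀ S ∈ s.powerset.filter (fun S => m ≤ S.card), S ≠ s.filter A →
      ∏ i ∈ s, (if i ∈ S then (if A i then Real.exp (-g i) else 0) else (if A i then (0:ℝ) else 1)) = 0 := by
    intro S hS hne
    simp only [Finset.mem_filter, Finset.mem_powerset] at hS
    by_contra h
    rw [Finset.prod_eq_zero_iff] at h
    push Not at h
    apply hne
    ext i
    simp only [Finset.mem_filter]
    constructor
    · intro hi
      refine ⟨hS.1 hi, ?_⟩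
      by_contra hA
      exact h i (hS.1 hi) (by simp [hi, hA])
    · rintro ⟨hi, hA⟩
      by_contra hA'
      exact h i hi (by simp [hA, hA'])
  split_ifs with h
  · rw [Finset.sum_eq_single (s.filter A) key]
    · rw [← Finset.sum_neg_distrib, Real.exp_sum]
      refine Finset.prod_congr rfl fun i hi => ?_
      by_cases hA : A i
      · simp [hA, hi]
      · simp [hA, hg i hA]
    · intro h'
      exact absurd (by simp [h]) h'
  · symm
    apply Finset.sum_eq_zero
    intro S hS
    apply key S hS
    rintro rfl
    simp only [Finset.mem_filter] at hS
    exact h hS.2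

lemma aux_bound (s : Finset ℕ) (m : ℕ) (p : ℝ) (hp0 : 0 ≤ p) (hp1 : p ≤ 1)
    (q : ℕ → ℝ) (hq0 : ∀ i, 0 ≤ q i) (hqp : ∀ i, q i ≤ p) :
    ∑ S ∈ s.powerset.filter (fun S => m ≤ S.card),
        ∏ i ∈ s, (if i ∈ S then q i else 1 - p) ≤ (s.card : ℝ) ^ m * p ^ m := by
  set w : Finset ℕ → ℝ := fun S => ∏ i ∈ s, (if i ∈ S then q i else 1 - p) with hw
  have hw0 : ∀ S, 0 ≤ w S := fun S => Finset.prod_nonneg fun i _ => by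
    split_ifs
    · exact hq0 i
    · linarith
  have h1 : ∀ U ∈ s.powersetCard m, ∑ S ∈ s.powerset, (if U ⊆ S then w S else 0) ≤ p ^ m := by
    intro U hU
    rw [Finset.mem_powersetCard] at hU
    have e : ∑ S ∈ s.powerset, (if U ⊆ S then w S else 0)
        = ∏ i ∈ s, (q i + if i ∈ U then 0 else (1 - p)) := by
      rw [Finset.prod_add]
      refine Finset.sum_congr rfl fun S hS => ?_
      rw [Finset.mem_powerset] at hS
      have : w S = (∏ i ∈ S, q i) * ∏ i ∈ s \ S, (1 - p) := by
        rw [hw]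
        simp only
        rw [Finset.prod_ite, Finset.filter_mem_eq_inter, Finset.inter_eq_right.mpr hS, ← Finset.sdiff_eq_filter]
      split_ifs with hUS
      · rw [this]
        congr 1
        refine Finset.prod_congr rfl fun i hi => ?_
        rw [if_neg]
        intro h
        exact (Finset.mem_sdiff.mp hi).2 (hUS h)
      · obtain ⟨i, hiU, hiS⟩ := Finset.not_subset.mp hUS
        symm
        apply mul_eq_zero_of_right
        exact Finset.prod_eq_zero (Finset.mem_sdiff.mpr ⟨hU.1 hiU, hiS⟩) (by simp [hiU])
    rw [e]
    calc ∏ i ∈ s, (q i + if i ∈ U then 0 else (1 - p)) ≤ ∏ i ∈ s, (if i ∈ U then p else 1) := by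
          apply Finset.prod_le_prod
          · intro i _
            have := hq0 i
            split_ifs <;> linarith
          · intro i _
            have := hqp i
            split_ifs <;> linarith
      _ = p ^ m := by
          rw [Finset.prod_ite_mem, Finset.inter_eq_right.mpr hU.1, Finset.prod_const, hU.2]
  calc ∑ S ∈ s.powerset.filter (fun S => m ≤ S.card), w S
      = ∑ S ∈ s.powerset, (if m ≤ S.card then w S else 0) := by rw [Finset.sum_filter]
    _ ≤ ∑ S ∈ s.powerset, ∑ U ∈ s.powersetCard m, (if U ⊆ S then w S else 0) := by
        refine Finset.sum_le_sum fun S hS => ?_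
        have hn : ∀ U ∈ s.powersetCard m, 0 ≤ (if U ⊆ S then w S else 0) := by
          intro U _
          split_ifs
          · exact hw0 S
          · exact le_rfl
        split_ifs with h
        · obtain ⟨U, hU, hc⟩ := Finset.exists_subset_card_eq h
          have := Finset.single_le_sum hn
            (Finset.mem_powersetCard.mpr ⟨hU.trans (Finset.mem_powerset.mp hS), hc⟩)
          simpa [hU] using this
        · exact Finset.sum_nonneg hn
    _ = ∑ U ∈ s.powersetCard m, ∑ S ∈ s.powerset, (if U ⊆ S then w S else 0) := Finset.sum_comm
    _ ≤ ∑ U ∈ s.powersetCard m, p ^ m := Finset.sum_le_sum h1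
    _ = (s.card.choose m : ℝ) * p ^ m := by simp [Finset.card_powersetCard]
    _ ≤ (s.card : ℝ) ^ m * p ^ m := by
        gcongr
        exact_mod_cast Nat.choose_le_pow s.card m

lemma aux_count (S : Finset ℕ) (s : Finset ℕ) (hSs : S ⊆ s) (m : ℕ) (hS : S.card = m) :
    (((Fintype.piFinset fun _ : Fin m => s).filter (fun v => Function.Injective v)).filter
      (fun v => Finset.univ.image v = S)).card = m.factorial := by
  have e : Fin m ≃ S := (Fintype.equivFinOfCardEq (by simpa using hS)).symm
  have : Fintype.card (Fin m ≃ S) = m.factorial := by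
    rw [Fintype.card_equiv e, Fintype.card_fin]
  rw [← this, ← Finset.card_univ]
  symm
  apply Finset.card_bij (fun (φ : Fin m ≃ S) _ => fun i => (φ i : ℕ))
  · intro φ _
    simp only [Finset.mem_filter, Fintype.mem_piFinset]
    refine ⟨⟨fun i => hSs (φ i).2, fun i j h => φ.injective (Subtype.ext h)⟩, ?_⟩
    ext x
    simp only [Finset.mem_image, Finset.mem_univ, true_and]
    constructor
    · rintro ⟨i, rfl⟩
      exact (φ i).2
    · intro hx
      exact ⟨φ.symm ⟨x, hx⟩, by simp⟩
  · intro φ _ ψ _ h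
    ext i
    exact congrFun h i
  · intro v hv
    simp only [Finset.mem_filter, Fintype.mem_piFinset] at hv
    obtain ⟨⟨_, hinj⟩, him⟩ := hv
    have hmem : ∀ i, v i ∈ S := fun i => him ▸ Finset.mem_image_of_mem v (Finset.mem_univ i)
    refine ⟨Equiv.ofBijective (fun i => (⟨v i, hmem i⟩ : S)) ⟨?_, ?_⟩, Finset.mem_univ _, ?_⟩
    · intro i j h
      exact hinj (congrArg Subtype.val h)
    · rintro ⟨x, hx⟩
      rw [← him] at hx
      obtain ⟨i, _, hi⟩ := Finset.mem_image.mp hx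
      exact ⟨i, Subtype.ext hi⟩
    · rfl

lemma aux_fact (s : Finset ℕ) (m : ℕ) (Q : ℕ → ℝ) :
    ∑ v ∈ (Fintype.piFinset fun _ : Fin m => s).filter (fun v => Function.Injective v), ∏ j, Q (v j)
      = (m.factorial : ℝ) * ∑ S ∈ s.powersetCard m, ∏ i ∈ S, Q i := by
  rw [← Finset.sum_fiberwise_of_maps_to (t := s.powersetCard m) (g := fun v => Finset.univ.image v),
    Finset.mul_sum]
  · refine Finset.sum_congr rfl fun S hS => ?_
    rw [Finset.mem_powersetCard] at hS
    rw [Finset.sum_congr rfl (g := fun _ => ∏ i ∈ S, Q i), Finset.sum_const, aux_count S s hS.1 m hS.2,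
      nsmul_eq_mul]
    intro v hv
    simp only [Finset.mem_filter] at hv
    rw [← hv.2, Finset.prod_image]
    exact fun i _ j _ h => hv.1.2 h
  · intro v hv
    simp only [Finset.mem_filter, Fintype.mem_piFinset] at hv
    rw [Finset.mem_powersetCard]
    refine ⟨?_, ?_⟩
    · intro x hx
      obtain ⟨i, _, rfl⟩ := Finset.mem_image.mp hx
      exact hv.1 i
    · rw [Finset.card_image_of_injective _ hv.2]
      simp

lemma aux_lim (s : Finset ℕ) (m : ℕ) (p : ℕ → ℝ) (pl : ℝ) (q : ℕ → ℕ → ℝ) (Q : ℕ → ℝ)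
    (hp : Tendsto (fun n : ℕ => (n : ℝ) * p n) atTop (𝓝 pl))
    (hq : ∀ i, Tendsto (fun n : ℕ => (n : ℝ) * q n i) atTop (𝓝 (Q i))) :
    Tendsto (fun n : ℕ => (n : ℝ) ^ m * ∑ S ∈ s.powerset.filter (fun S => m ≤ S.card),
        ∏ i ∈ s, (if i ∈ S then q n i else 1 - p n)) atTop
      (𝓝 (∑ S ∈ s.powersetCard m, ∏ i ∈ S, Q i)) := by
  have hinv : Tendsto (fun n : ℕ => ((n : ℝ))⁻¹) atTop (𝓝 0) :=
    tendsto_inv_atTop_zero.comp tendsto_natCast_atTop_atTop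
  have hp0 : Tendsto (fun n : ℕ => 1 - p n) atTop (𝓝 1) := by
    have h := (hinv.mul hp).const_sub 1
    simp only [zero_mul, sub_zero] at h
    refine h.congr' ?_
    filter_upwards [eventually_ge_atTop 1] with n hn
    have : (n : ℝ) ≠ 0 := by positivity
    field_simp
  have e : ∑ S ∈ s.powersetCard m, ∏ i ∈ S, Q i
      = ∑ S ∈ s.powerset.filter (fun S => m ≤ S.card), (if S.card = m then ∏ i ∈ S, Q i else 0) := by
    rw [← Finset.sum_filter]
    refine Finset.sum_congr ?_ fun _ _ => rfl
    ext S
    simp only [Finset.mem_powersetCard, Finset.mem_filter, Finset.mem_powerset]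
    constructor
    · rintro ⟨h, h'⟩; exact ⟨⟨h, h'.ge⟩, h'⟩
    · rintro ⟨⟨h, _⟩, h'⟩; exact ⟨h, h'⟩
  rw [e]
  simp_rw [Finset.mul_sum]
  refine tendsto_finsetSum _ fun S hS => ?_
  simp only [Finset.mem_filter, Finset.mem_powerset] at hS
  have h1 : Tendsto (fun n : ℕ => ((n : ℝ)⁻¹) ^ (S.card - m) *
      ((∏ i ∈ S, ((n : ℝ) * q n i)) * ∏ i ∈ s \ S, (1 - p n))) atTop
      (𝓝 ((0 : ℝ) ^ (S.card - m) * ((∏ i ∈ S, Q i) * ∏ i ∈ s \ S, 1))) :=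
    (hinv.pow _).mul ((tendsto_finsetProd _ fun i _ => hq i).mul (tendsto_finsetProd _ fun i _ => hp0))
  have e2 : (0 : ℝ) ^ (S.card - m) * ((∏ i ∈ S, Q i) * ∏ i ∈ s \ S, (1:ℝ))
      = (if S.card = m then ∏ i ∈ S, Q i else 0) := by
    split_ifs with h
    · simp [h]
    · rw [zero_pow (by omega), zero_mul]
  rw [e2] at h1
  refine h1.congr' ?_
  filter_upwards [eventually_ge_atTop 1] with n hn
  have hn0 : (n : ℝ) ≠ 0 := by positivity
  rw [Finset.prod_ite, Finset.filter_mem_eq_inter, Finset.inter_eq_right.mpr hS.1, ← Finset.sdiff_eq_filter,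
    Finset.prod_mul_distrib, Finset.prod_const, ← mul_assoc, ← mul_assoc, ← mul_assoc]
  congr 2
  obtain ⟨d, hd⟩ := Nat.exists_eq_add_of_le hS.2
  rw [hd, Nat.add_sub_cancel_left, pow_add, mul_comm ((n:ℝ)^m), ← mul_assoc, ← mul_pow, inv_mul_cancel₀ hn0,
    one_pow, one_mul]

lemma aux_rv {X : Type*} [MetricSpace X] [MeasurableSpace X] [BorelSpace X]
    (x0 : X) (s : ℕ → X → X) (hs : ∀ n, Continuous (s n))
    (ν : Measure X) [IsProbabilityMeasure ν] (μ : Measure X)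
    (hμFin : ∀ ρ > (0 : ℝ), μ {x | ρ ≤ dist x0 x} ≠ ⊤)
    (hRV : ∀ h : X → ℝ, Continuous h → (∃ C, ∀ x, |h x| ≤ C) →
      (∃ ρ > (0 : ℝ), ∀ x, dist x0 x < ρ → h x = 0) →
      Tendsto (fun n : ℕ => (n : ℝ) * ∫ x, h (s n x) ∂ν) atTop (𝓝 (∫ x, h x ∂μ)))
    (r : ℝ) (hr : 0 < r) (hrcont : μ {x | dist x0 x = r} = 0)
    (h : X → ℝ) (hc : Continuous h) (h0 : ∀ x, 0 ≤ h x) (h1 : ∀ x, h x ≤ 1) :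
    Tendsto (fun n : ℕ => (n : ℝ) * ∫ x, (if r ≤ dist x0 (s n x) then h (s n x) else 0) ∂ν) atTop
      (𝓝 (∫ x in {x | r ≤ dist x0 x}, h x ∂μ)) := by
  have hdc : Continuous (fun x => dist x0 x) := by fun_prop
  have hA : MeasurableSet {x | r ≤ dist x0 x} := measurableSet_le measurable_const hdc.measurable
  have hA2 : MeasurableSet {x | r / 2 ≤ dist x0 x} := measurableSet_le measurable_const hdc.measurable
  set φ : ℝ → ℝ := fun y => max 0 (min 1 y) with hφ
  have φ0 : ∀ y, 0 ≤ φ y := fun y => le_max_left _ _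
  have φ1 : ∀ y, φ y ≤ 1 := fun y => max_le zero_le_one (min_le_left _ _)
  have φc : Continuous φ := by fun_prop
  have φn : ∀ y, y ≤ 0 → φ y = 0 := fun y hy => max_eq_left ((min_le_right _ _).trans hy)
  have φp : ∀ y, 1 ≤ y → φ y = 1 := fun y hy => by simp [hφ, hy]
  set up : ℕ → X → ℝ := fun m x => φ (1 + ((m:ℝ) + 1) * (2 / r) * (dist x0 x - r)) * h x with hup
  set lo : ℕ → X → ℝ := fun m x => φ (((m:ℝ) + 1) * (dist x0 x - r)) * h x with hlo
  have upc : ∀ m, Continuous (up m) := fun m => by fun_prop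
  have loc : ∀ m, Continuous (lo m) := fun m => by fun_prop
  have up0 : ∀ m x, 0 ≤ up m x := fun m x => mul_nonneg (φ0 _) (h0 x)
  have lo0 : ∀ m x, 0 ≤ lo m x := fun m x => mul_nonneg (φ0 _) (h0 x)
  have up1 : ∀ m x, up m x ≤ 1 := fun m x => mul_le_one₀ (φ1 _) (h0 x) (h1 x)
  have lo1 : ∀ m x, lo m x ≤ 1 := fun m x => mul_le_one₀ (φ1 _) (h0 x) (h1 x)
  have upv : ∀ m x, dist x0 x < r / 2 → up m x = 0 := by
    intro m x hx
    rw [hup]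
    simp only
    rw [φn, zero_mul]
    have hm : (0:ℝ) ≤ m := Nat.cast_nonneg m
    have e : (2 / r) * (dist x0 x - r) ≤ -1 := by
      rw [div_mul_eq_mul_div, div_le_iff₀ hr]
      linarith
    nlinarith
  have lov : ∀ m x, dist x0 x ≤ r → lo m x = 0 := by
    intro m x hx
    rw [hlo]
    simp only
    rw [φn, zero_mul]
    have hm : (0:ℝ) ≤ m := Nat.cast_nonneg m
    exact mul_nonpos_of_nonneg_of_nonpos (by linarith) (by linarith)
  have upr : ∀ m x, r ≤ dist x0 x → up m x = h x := by
    intro m x hx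
    rw [hup]
    simp only
    rw [φp, one_mul]
    have : 0 ≤ ((m:ℝ) + 1) * (2 / r) * (dist x0 x - r) := mul_nonneg (by positivity) (by linarith)
    linarith
  have hbi : Integrable ({x | r / 2 ≤ dist x0 x}.indicator (fun _ => (1:ℝ))) μ :=
    (integrable_indicator_iff hA2).2 (integrableOn_const (hμFin _ (by positivity)))
  have tup : Tendsto (fun m => ∫ x, up m x ∂μ) atTop (𝓝 (∫ x in {x | r ≤ dist x0 x}, h x ∂μ)) := by
    rw [← integral_indicator hA]
    refine tendsto_integral_of_dominated_convergence _ (fun m => (upc m).measurable.aestronglyMeasurable) hbi ?_ ?_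
    · refine fun m => Eventually.of_forall fun x => ?_
      rw [Real.norm_of_nonneg (up0 m x)]
      by_cases hx : dist x0 x < r / 2
      · rw [upv m x hx]
        exact Set.indicator_nonneg (fun _ _ => zero_le_one) _
      · rw [Set.indicator_of_mem (show x ∈ {x | r / 2 ≤ dist x0 x} from not_lt.mp hx)]
        exact up1 m x
    · refine Eventually.of_forall fun x => ?_
      by_cases hx : r ≤ dist x0 x
      · rw [Set.indicator_of_mem (show x ∈ {x | r ≤ dist x0 x} from hx)]
        exact tendsto_const_nhds.congr fun m => (upr m x hx).symm
      · rw [Set.indicator_of_notMem (show x ∉ {x | r ≤ dist x0 x} from hx)]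
        push Not at hx
        refine tendsto_const_nhds.congr' ?_
        have ht : Tendsto (fun m : ℕ => ((m:ℝ) + 1) * ((2 / r) * (r - dist x0 x))) atTop atTop :=
          (tendsto_atTop_add_const_right _ _ tendsto_natCast_atTop_atTop).atTop_mul_const
            (mul_pos (by positivity) (by linarith))
        filter_upwards [ht.eventually_ge_atTop 1] with m hm
        rw [hup]
        simp only
        rw [φn, zero_mul]
        nlinarith
  have tlo : Tendsto (fun m => ∫ x, lo m x ∂μ) atTop (𝓝 (∫ x in {x | r ≤ dist x0 x}, h x ∂μ)) := by
    rw [← integral_indicator hA]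
    refine tendsto_integral_of_dominated_convergence _ (fun m => (loc m).measurable.aestronglyMeasurable) hbi ?_ ?_
    · refine fun m => Eventually.of_forall fun x => ?_
      rw [Real.norm_of_nonneg (lo0 m x)]
      by_cases hx : dist x0 x < r / 2
      · rw [lov m x (by linarith)]
        exact Set.indicator_nonneg (fun _ _ => zero_le_one) _
      · rw [Set.indicator_of_mem (show x ∈ {x | r / 2 ≤ dist x0 x} from not_lt.mp hx)]
        exact lo1 m x
    · have hae : ∀ᵐ x ∂μ, dist x0 x ≠ r := by
        rw [ae_iff]
        simpa using hrcont
      filter_upwards [hae] with x hxr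
      by_cases hx : r ≤ dist x0 x
      · rw [Set.indicator_of_mem (show x ∈ {x | r ≤ dist x0 x} from hx)]
        have hx' : 0 < dist x0 x - r := by
          have := lt_of_le_of_ne hx hxr.symm
          linarith
        refine tendsto_const_nhds.congr' ?_
        have ht : Tendsto (fun m : ℕ => ((m:ℝ) + 1) * (dist x0 x - r)) atTop atTop :=
          (tendsto_atTop_add_const_right _ _ tendsto_natCast_atTop_atTop).atTop_mul_const hx'
        filter_upwards [ht.eventually_ge_atTop 1] with m hm
        rw [hlo]
        simp only
        rw [φp _ hm, one_mul]
      · rw [Set.indicator_of_notMem (show x ∉ {x | r ≤ dist x0 x} from hx)]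
        push Not at hx
        exact tendsto_const_nhds.congr fun m => (lov m x hx.le).symm
  have Rup := fun m => hRV (up m) (upc m) ⟨1, fun x => by rw [abs_of_nonneg (up0 m x)]; exact up1 m x⟩
    ⟨r / 2, by positivity, upv m⟩
  have Rlo := fun m => hRV (lo m) (loc m) ⟨1, fun x => by rw [abs_of_nonneg (lo0 m x)]; exact lo1 m x⟩
    ⟨r, hr, fun x hx => lov m x hx.le⟩
  have bint : ∀ g : X → ℝ, Measurable g → (∀ x, 0 ≤ g x) → (∀ x, g x ≤ 1) → Integrable g ν := by
    intro g hg hg0 hg1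
    refine Integrable.of_bound hg.aestronglyMeasurable 1 (Eventually.of_forall fun x => ?_)
    rw [Real.norm_of_nonneg (hg0 x)]
    exact hg1 x
  have mI : ∀ n, Integrable (fun x => (if r ≤ dist x0 (s n x) then h (s n x) else 0)) ν := by
    intro n
    apply bint
    · exact Measurable.ite (measurableSet_le measurable_const (hdc.comp (hs n)).measurable)
        (hc.comp (hs n)).measurable measurable_const
    · intro x
      split_ifs
      · exact h0 _
      · exact le_rfl
    · intro x
      split_ifs
      · exact h1 _
      · exact zero_le_one
  rw [tendsto_order]
  constructor
  · intro c hcl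
    obtain ⟨m, hm⟩ := (tlo.eventually_const_lt hcl).exists
    filter_upwards [(Rlo m).eventually_const_lt hm] with n hn
    refine hn.trans_le (mul_le_mul_of_nonneg_left ?_ (Nat.cast_nonneg n))
    refine integral_mono (bint _ ((loc m).comp (hs n)).measurable (fun x => lo0 m _) (fun x => lo1 m _)) (mI n) ?_
    intro x
    simp only
    split_ifs with hx
    · exact mul_le_of_le_one_left (h0 _) (φ1 _)
    · exact (lov m _ (not_le.mp hx).le).le
  · intro c hcl
    obtain ⟨m, hm⟩ := (tup.eventually_lt_const hcl).exists
    filter_upwards [(Rup m).eventually_lt_const hm] with n hn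
    refine lt_of_le_of_lt (mul_le_mul_of_nonneg_left ?_ (Nat.cast_nonneg n)) hn
    refine integral_mono (mI n) (bint _ ((upc m).comp (hs n)).measurable (fun x => up0 m _) (fun x => up1 m _)) ?_
    intro x
    simp only
    split_ifs with hx
    · exact (upr m _ hx).ge
    · exact up0 m _

lemma aux_joint {T X Ω : Type*} [MeasurableSpace T] [MeasurableSpace X] [MeasurableSpace Ω]
    (ν : Measure X) [IsProbabilityMeasure ν]
    (P : Measure Ω) [IsProbabilityMeasure P] (N : Ω → ℕ) (hNmeas : Measurable N)
    (Tt : ℕ → Ω → T) (hTmeas : ∀ i, Measurable (Tt i))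
    (Xx : ℕ → Ω → X) (hXmeas : ∀ i, Measurable (Xx i))
    (hXlaw : ∀ i, Measure.map (Xx i) P = ν)
    (hIndep : ∀ (j n : ℕ) (A : ℕ → Set T) (B : ℕ → Set X),
      (∀ i, MeasurableSet (A i)) → (∀ i, MeasurableSet (B i)) →
      P (({ω | N ω = j} ∩ ⋂ i ∈ Finset.range n, {ω | Tt i ω ∈ A i}) ∩
          ⋂ i ∈ Finset.range n, {ω | Xx i ω ∈ B i})
        = P ({ω | N ω = j} ∩ ⋂ i ∈ Finset.range n, {ω | Tt i ω ∈ A i}) *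
          ∏ i ∈ Finset.range n, P {ω | Xx i ω ∈ B i}) (j : ℕ) :
    Measure.map (fun ω => ((fun i : Fin j => Tt i ω), (fun i : Fin j => Xx i ω)))
      (P.restrict {ω | N ω = j})
    = (Measure.map (fun ω => (fun i : Fin j => Tt i ω)) (P.restrict {ω | N ω = j})).prod
        (Measure.pi fun _ : Fin j => ν) := by
  have hτ : Measurable (fun ω => (fun i : Fin j => Tt i ω)) := measurable_pi_lambda _ fun i => hTmeas i
  have hξ : Measurable (fun ω => (fun i : Fin j => Xx i ω)) := measurable_pi_lambda _ fun i => hXmeas i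
  symm
  refine Measure.prod_eq_generateFrom generateFrom_pi generateFrom_pi isPiSystem_pi isPiSystem_pi
    ⟨fun _ => Set.univ, fun _ => ⟨fun _ => Set.univ, by simp, by simp⟩, fun _ => measure_lt_top _ _, Set.iUnion_const _⟩
    ⟨fun _ => Set.univ, fun _ => ⟨fun _ => Set.univ, by simp, by simp⟩, fun _ => measure_lt_top _ _, Set.iUnion_const _⟩ ?_
  rintro _ ⟨A, hA, rfl⟩ _ ⟨B, hB, rfl⟩
  simp only [Set.mem_pi, Set.mem_univ, forall_true_left, Set.mem_ofPred_eq] at hA hB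
  have hN : MeasurableSet {ω | N ω = j} := hNmeas (measurableSet_singleton j)
  have mA := MeasurableSet.univ_pi hA
  have mB := MeasurableSet.univ_pi hB
  rw [Measure.map_apply (hτ.prodMk hξ) (mA.prod mB), Measure.map_apply hτ mA, Measure.pi_pi,
    Measure.restrict_apply ((hτ.prodMk hξ) (mA.prod mB)), Measure.restrict_apply (hτ mA)]
  have key := hIndep j j (fun i => if h : i < j then A ⟨i, h⟩ else Set.univ)
    (fun i => if h : i < j then B ⟨i, h⟩ else Set.univ)
    (fun i => by
      by_cases h : i < j
      · simpa [h] using hA ⟨i, h⟩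
      · simp [h])
    (fun i => by
      by_cases h : i < j
      · simpa [h] using hB ⟨i, h⟩
      · simp [h])
  have e1 : (fun ω => ((fun i : Fin j => Tt i ω), (fun i : Fin j => Xx i ω))) ⁻¹'
      (Set.univ.pi A ×ˢ Set.univ.pi B) ∩ {ω | N ω = j} =
      (({ω | N ω = j} ∩ ⋂ i ∈ Finset.range j, {ω | Tt i ω ∈ (if h : i < j then A ⟨i, h⟩ else Set.univ)}) ∩
          ⋂ i ∈ Finset.range j, {ω | Xx i ω ∈ (if h : i < j then B ⟨i, h⟩ else Set.univ)}) := by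
    ext ω
    simp only [Set.mem_inter_iff, Set.mem_preimage, Set.mem_prod, Set.mem_pi, Set.mem_univ,
      forall_true_left, Set.mem_ofPred_eq, Set.mem_iInter, Finset.mem_range]
    constructor
    · rintro ⟨⟨h1, h2⟩, h3⟩
      refine ⟨⟨h3, fun i hi => ?_⟩, fun i hi => ?_⟩
      · simpa [hi] using h1 ⟨i, hi⟩
      · simpa [hi] using h2 ⟨i, hi⟩
    · rintro ⟨⟨h3, h1⟩, h2⟩
      refine ⟨⟨fun i => ?_, fun i => ?_⟩, h3⟩
      · simpa using h1 i i.2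
      · simpa using h2 i i.2
  have e2 : (fun ω => (fun i : Fin j => Tt i ω)) ⁻¹' (Set.univ.pi A) ∩ {ω | N ω = j} =
      ({ω | N ω = j} ∩ ⋂ i ∈ Finset.range j, {ω | Tt i ω ∈ (if h : i < j then A ⟨i, h⟩ else Set.univ)}) := by
    ext ω
    simp only [Set.mem_inter_iff, Set.mem_preimage, Set.mem_pi, Set.mem_univ,
      forall_true_left, Set.mem_ofPred_eq, Set.mem_iInter, Finset.mem_range]
    constructor
    · rintro ⟨h1, h3⟩
      refine ⟨h3, fun i hi => ?_⟩
      simpa [hi] using h1 ⟨i, hi⟩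
    · rintro ⟨h3, h1⟩
      refine ⟨fun i => ?_, h3⟩
      simpa using h1 i i.2
  rw [e1, e2, key, Finset.prod_range]
  congr 1
  refine Finset.prod_congr rfl fun i _ => ?_
  simp only [Fin.is_lt, dif_pos, Fin.eta]
  rw [← hXlaw i, Measure.map_apply (hXmeas i) (hB i)]
  rfl

lemma aux_cond {T X Ω : Type*} [MeasurableSpace T] [MeasurableSpace X] [MeasurableSpace Ω]
    (ν : Measure X) [IsProbabilityMeasure ν]
    (P : Measure Ω) [IsProbabilityMeasure P] (N : Ω → ℕ)
    (Tt : ℕ → Ω → T) (hTmeas : ∀ i, Measurable (Tt i))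
    (Xx : ℕ → Ω → X) (hXmeas : ∀ i, Measurable (Xx i)) (j : ℕ)
    (hJ : Measure.map (fun ω => ((fun i : Fin j => Tt i ω), (fun i : Fin j => Xx i ω)))
      (P.restrict {ω | N ω = j})
    = (Measure.map (fun ω => (fun i : Fin j => Tt i ω)) (P.restrict {ω | N ω = j})).prod
        (Measure.pi fun _ : Fin j => ν))
    (g : ℕ → T × X → ℝ) (hg : ∀ i, Measurable (g i)) (hg0 : ∀ i z, 0 ≤ g i z) (hg1 : ∀ i z, g i z ≤ 1) :
    ∫ ω in {ω | N ω = j}, ∏ i ∈ Finset.range j, g i (Tt i ω, Xx i ω) ∂P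
      = ∫ ω in {ω | N ω = j}, ∏ i ∈ Finset.range j, ∫ x, g i (Tt i ω, x) ∂ν ∂P := by
  have hτ : Measurable (fun ω => (fun i : Fin j => Tt i ω)) := measurable_pi_lambda _ fun i => hTmeas i
  have hξ : Measurable (fun ω => (fun i : Fin j => Xx i ω)) := measurable_pi_lambda _ fun i => hXmeas i
  simp_rw [Finset.prod_range]
  set F : (Fin j → T) × (Fin j → X) → ℝ := fun z => ∏ i : Fin j, g i (z.1 i, z.2 i) with hF
  have hFm : Measurable F := by
    refine Finset.measurable_prod _ fun i _ => (hg i).comp ?_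
    exact ((measurable_pi_apply i).comp measurable_fst).prodMk ((measurable_pi_apply i).comp measurable_snd)
  have hqm : ∀ i, Measurable (fun t => ∫ x, g i (t, x) ∂ν) := fun i =>
    (StronglyMeasurable.integral_prod_right (f := fun t x => g i (t, x)) (hg i).stronglyMeasurable).measurable
  have l : ∫ ω in {ω | N ω = j}, ∏ i : Fin j, g i (Tt i ω, Xx i ω) ∂P =
      ∫ z, F z ∂(Measure.map (fun ω => ((fun i : Fin j => Tt i ω), (fun i : Fin j => Xx i ω)))
      (P.restrict {ω | N ω = j})) := by
    rw [integral_map (hτ.prodMk hξ).aemeasurable hFm.aestronglyMeasurable]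
  have r : ∫ ω in {ω | N ω = j}, ∏ i : Fin j, ∫ x, g i (Tt i ω, x) ∂ν ∂P =
      ∫ τ, ∏ i : Fin j, ∫ x, g i (τ i, x) ∂ν ∂(Measure.map (fun ω => (fun i : Fin j => Tt i ω))
      (P.restrict {ω | N ω = j})) := by
    rw [integral_map hτ.aemeasurable]
    exact (Finset.measurable_prod _ fun (i : Fin j) _ => (hqm i).comp (measurable_pi_apply (X := fun _ : Fin j => T) i)).aestronglyMeasurable
  rw [l, r, hJ, integral_prod]
  · congr 1
    ext τ
    exact integral_fintype_prod_eq_prod (fun (i : Fin j) x => g i (τ i, x))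
  · refine Integrable.of_bound hFm.aestronglyMeasurable 1 (Eventually.of_forall fun z => ?_)
    rw [Real.norm_of_nonneg (Finset.prod_nonneg fun i _ => hg0 _ _)]
    exact Finset.prod_le_one (fun i _ => hg0 _ _) (fun i _ => hg1 _ _)


set_option maxHeartbeats 2000000 in
/-- Hidden regular variation of independently marked point processes, truncated
Laplace-functional form (Theorem 3.2 of the paper). -/
theorem stmt_14
    {T : Type*} [MetricSpace T] [CompleteSpace T] [TopologicalSpace.SeparableSpace T]
    [MeasurableSpace T] [BorelSpace T]
    {X : Type*} [MetricSpace X] [CompleteSpace X] [TopologicalSpace.SeparableSpace X]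
    [MeasurableSpace X] [BorelSpace X]
    (x0 : X) (σ : ℝ → X → X)
    (hσc : ContinuousOn (fun p : ℝ × X => σ p.1 p.2) (Set.Ioi (0 : ℝ) ×ˢ Set.univ))
    (hσ1 : ∀ x, σ 1 x = x)
    (hσm : ∀ u v : ℝ, 0 < u → 0 < v → ∀ x, σ u (σ v x) = σ (u * v) x)
    (hσ0 : ∀ u : ℝ, 0 < u → σ u x0 = x0)
    (ν : Measure X) [IsProbabilityMeasure ν] (hν0 : ν {x0} = 0)
    (a : ℕ → ℝ) (ha : ∀ n, 0 < a n) (haTop : Tendsto a atTop atTop)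
    (μ : Measure X) (hμ0 : μ ≠ 0)
    (hμFin : ∀ ρ > (0 : ℝ), μ {x | ρ ≤ dist x0 x} ≠ ⊤)
    (hRV : ∀ h : X → ℝ, Continuous h → (∃ C, ∀ x, |h x| ≤ C) →
      (∃ ρ > (0 : ℝ), ∀ x, dist x0 x < ρ → h x = 0) →
      Tendsto (fun n : ℕ => (n : ℝ) * ∫ x, h (σ (a n)⁻¹ x) ∂ν) atTop (𝓝 (∫ x, h x ∂μ)))
    {Ω : Type*} [MeasurableSpace Ω] (P : Measure Ω) [IsProbabilityMeasure P]
    (k : ℕ) (N : Ω → ℕ) (hNmeas : Measurable N)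
    (hNmom : Integrable (fun ω => (N ω : ℝ) ^ (k + 1)) P)
    (hNk : 0 < P {ω | k + 1 ≤ N ω})
    (Tt : ℕ → Ω → T) (hTmeas : ∀ i, Measurable (Tt i))
    (Xx : ℕ → Ω → X) (hXmeas : ∀ i, Measurable (Xx i))
    (hXlaw : ∀ i, Measure.map (Xx i) P = ν)
    (hIndep : ∀ (j n : ℕ) (A : ℕ → Set T) (B : ℕ → Set X),
      (∀ i, MeasurableSet (A i)) → (∀ i, MeasurableSet (B i)) →
      P (({ω | N ω = j} ∩ ⋂ i ∈ Finset.range n, {ω | Tt i ω ∈ A i}) ∩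
          ⋂ i ∈ Finset.range n, {ω | Xx i ω ∈ B i})
        = P ({ω | N ω = j} ∩ ⋂ i ∈ Finset.range n, {ω | Tt i ω ∈ A i}) *
          ∏ i ∈ Finset.range n, P {ω | Xx i ω ∈ B i})
    (r : ℝ) (hr : 0 < r) (hrcont : μ {x | dist x0 x = r} = 0)
    (f : T × X → ℝ) (hfc : Continuous f) (hf0 : ∀ z, 0 ≤ f z) (hfb : ∃ C, ∀ z, f z ≤ C)
    (hfvan : ∀ t x, dist x0 x < r → f (t, x) = 0) :
    Tendsto (fun n : ℕ => (n : ℝ) ^ (k + 1) *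
        ∫ ω, (if k + 1 ≤ ((Finset.range (N ω)).filter
              (fun i => r ≤ dist x0 (σ (a n)⁻¹ (Xx i ω)))).card then
            Real.exp (-∑ i ∈ Finset.range (N ω), f (Tt i ω, σ (a n)⁻¹ (Xx i ω)))
          else 0) ∂P)
      atTop
      (𝓝 ((Nat.factorial (k + 1) : ℝ)⁻¹ *
        ∫ ω, ∑ v ∈ (Fintype.piFinset fun _ : Fin (k + 1) => Finset.range (N ω)).filter
            (fun v => Function.Injective v),
          ∏ j, ∫ x in {x | r ≤ dist x0 x}, Real.exp (-f (Tt (v j) ω, x)) ∂μ ∂P)) := by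
  have : SecondCountableTopology T := UniformSpace.secondCountable_of_separable T
  have : SecondCountableTopology X := UniformSpace.secondCountable_of_separable X
  set s : ℕ → X → X := fun n => σ (a n)⁻¹ with hs_def
  have hs : ∀ n, Continuous (s n) := by
    intro n
    rw [← continuousOn_univ]
    refine hσc.comp (f := fun x => ((a n)⁻¹, x)) (by fun_prop) ?_
    intro x _
    exact ⟨inv_pos.mpr (ha n), Set.mem_univ _⟩
  have hsm : ∀ n, Measurable (s n) := fun n => (hs n).measurable
  have hfm : Measurable f := hfc.measurable
  have hAm : ∀ n, MeasurableSet {x | r ≤ dist x0 (s n x)} := fun n =>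
    measurableSet_le measurable_const (continuous_const.dist (hs n)).measurable
  have hAm2 : ∀ n, MeasurableSet {z : T × X | r ≤ dist x0 (s n z.2)} := fun n => measurable_snd (hAm n)
  -- building blocks
  set u : ℕ → T × X → ℝ := fun n z =>
    if r ≤ dist x0 (s n z.2) then Real.exp (-f (z.1, s n z.2)) else 0 with hu
  set w : ℕ → T × X → ℝ := fun n z => if r ≤ dist x0 (s n z.2) then 0 else 1 with hw
  have hum : ∀ n, Measurable (u n) := fun n => by
    refine Measurable.ite (hAm2 n) ?_ measurable_const
    exact (hfm.comp (measurable_fst.prodMk ((hsm n).comp measurable_snd))).neg.exp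
  have hwm : ∀ n, Measurable (w n) := fun n => Measurable.ite (hAm2 n) measurable_const measurable_const
  have he1 : ∀ z, Real.exp (-f z) ≤ 1 := fun z => by
    rw [Real.exp_le_one_iff]
    linarith [hf0 z]
  have hu0 : ∀ n z, 0 ≤ u n z := fun n z => by
    simp only [hu]
    split_ifs
    · exact (Real.exp_pos _).le
    · exact le_rfl
  have hu1 : ∀ n z, u n z ≤ 1 := fun n z => by
    simp only [hu]
    split_ifs
    · exact he1 _
    · exact zero_le_one
  have hw0 : ∀ n z, 0 ≤ w n z := fun n z => by
    simp only [hw]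
    split_ifs <;> norm_num
  have hw1 : ∀ n z, w n z ≤ 1 := fun n z => by
    simp only [hw]
    split_ifs <;> norm_num
  set q : ℕ → T → ℝ := fun n t => ∫ x, u n (t, x) ∂ν with hq
  set p : ℕ → ℝ := fun n => ∫ x, (if r ≤ dist x0 (s n x) then (1 : ℝ) else 0) ∂ν with hp
  have hqm : ∀ n, Measurable (q n) := fun n =>
    (StronglyMeasurable.integral_prod_right (f := fun t x => u n (t, x)) (hum n).stronglyMeasurable).measurable
  have hind : ∀ n, Measurable (fun x => if r ≤ dist x0 (s n x) then (1 : ℝ) else 0) := fun n =>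
    Measurable.ite (hAm n) measurable_const measurable_const
  have hindI : ∀ n, Integrable (fun x => if r ≤ dist x0 (s n x) then (1 : ℝ) else 0) ν := fun n => by
    refine Integrable.of_bound (hind n).aestronglyMeasurable 1 (Eventually.of_forall fun x => ?_)
    split_ifs <;> simp
  have huI : ∀ n t, Integrable (fun x => u n (t, x)) ν := fun n t => by
    refine Integrable.of_bound ((hum n).comp measurable_prodMk_left).aestronglyMeasurable 1
      (Eventually.of_forall fun x => ?_)
    rw [Real.norm_of_nonneg (hu0 _ _)]
    exact hu1 _ _
  have hwp : ∀ n t, ∫ x, w n (t, x) ∂ν = 1 - p n := by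
    intro n t
    have : ∀ x, w n (t, x) = 1 - (if r ≤ dist x0 (s n x) then (1 : ℝ) else 0) := by
      intro x
      simp only [hw]
      split_ifs <;> simp
    simp_rw [this]
    rw [integral_sub (integrable_const _) (hindI n)]
    simp [hp]
  have hp0 : ∀ n, 0 ≤ p n := fun n => integral_nonneg fun x => by
    simp only [Pi.zero_apply]
    split_ifs <;> norm_num
  have hp1 : ∀ n, p n ≤ 1 := fun n => by
    have h : ∫ x, (if r ≤ dist x0 (s n x) then (1 : ℝ) else 0) ∂ν ≤ ∫ x, (1 : ℝ) ∂ν :=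
      integral_mono (hindI n) (integrable_const _) fun x => by
        simp only
        split_ifs <;> norm_num
    simpa using h
  have hq0 : ∀ n t, 0 ≤ q n t := fun n t => integral_nonneg fun x => hu0 n _
  have hqp : ∀ n t, q n t ≤ p n := fun n t =>
    integral_mono (huI n t) (hindI n) fun x => by
      simp only [hu]
      split_ifs
      · exact he1 _
      · exact le_rfl
  -- convergence
  have hpl := aux_rv x0 s hs ν μ hμFin hRV r hr hrcont (fun _ => 1) continuous_const
    (fun _ => zero_le_one) (fun _ => le_rfl)
  have hql : ∀ t, Tendsto (fun n : ℕ => (n : ℝ) * q n t) atTop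
      (𝓝 (∫ x in {x | r ≤ dist x0 x}, Real.exp (-f (t, x)) ∂μ)) := fun t =>
    aux_rv x0 s hs ν μ hμFin hRV r hr hrcont (fun x => Real.exp (-f (t, x))) (by fun_prop)
      (fun _ => (Real.exp_pos _).le) (fun _ => he1 _)
  -- conditional expectation
  set g : ℕ → Finset ℕ → ℕ → T × X → ℝ := fun n S i => if i ∈ S then u n else w n with hg
  have hgm : ∀ n S i, Measurable (g n S i) := fun n S i => by
    simp only [hg]
    split_ifs
    · exact hum n
    · exact hwm n
  have hg0 : ∀ n S i z, 0 ≤ g n S i z := fun n S i z => by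
    simp only [hg]
    split_ifs
    · exact hu0 n z
    · exact hw0 n z
  have hg1 : ∀ n S i z, g n S i z ≤ 1 := fun n S i z => by
    simp only [hg]
    split_ifs
    · exact hu1 n z
    · exact hw1 n z
  set Sf : ℕ → Finset (Finset ℕ) := fun j =>
    (Finset.range j).powerset.filter (fun S => k + 1 ≤ S.card) with hSf
  set F : ℕ → Ω → ℝ := fun n ω => (if k + 1 ≤ ((Finset.range (N ω)).filter
              (fun i => r ≤ dist x0 (s n (Xx i ω)))).card then
            Real.exp (-∑ i ∈ Finset.range (N ω), f (Tt i ω, s n (Xx i ω)))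
          else 0) with hF
  have hFe : ∀ n ω, F n ω = ∑ S ∈ Sf (N ω), ∏ i ∈ Finset.range (N ω), g n S i (Tt i ω, Xx i ω) := by
    intro n ω
    simp only [hF, hSf]
    rw [aux_expand (Finset.range (N ω)) (k + 1) (fun i => r ≤ dist x0 (s n (Xx i ω)))
      (fun i => f (Tt i ω, s n (Xx i ω))) (fun i hi => hfvan _ _ (not_le.mp hi))]
    refine Finset.sum_congr rfl fun S _ => Finset.prod_congr rfl fun i _ => ?_
    by_cases hi : i ∈ S
    · simp only [hg, hi, if_true, hu]
    · simp only [hg, hi, if_false, hw]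
  set G : ℕ → Ω → ℝ := fun n ω => ∑ S ∈ Sf (N ω), ∏ i ∈ Finset.range (N ω),
    (if i ∈ S then q n (Tt i ω) else 1 - p n) with hG
  have hFm : ∀ n, Measurable (F n) := by
    intro n
    have h : Measurable (fun z : ℕ × Ω => ∑ S ∈ Sf z.1, ∏ i ∈ Finset.range z.1,
        g n S i (Tt i z.2, Xx i z.2)) := by
      refine measurable_from_prod_countable_right fun j => ?_
      simp only
      refine Finset.measurable_sum (Sf j) fun S _ => ?_
      refine Finset.measurable_prod (Finset.range j) fun i _ => ?_
      exact (hgm n S i).comp ((hTmeas i).prodMk (hXmeas i))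
    have h2 := h.comp (hNmeas.prodMk measurable_id)
    convert h2 using 1
    ext ω
    exact hFe n ω
  have hGm : ∀ n, Measurable (G n) := by
    intro n
    have h : Measurable (fun z : ℕ × Ω => ∑ S ∈ Sf z.1, ∏ i ∈ Finset.range z.1,
        (if i ∈ S then q n (Tt i z.2) else 1 - p n)) := by
      refine measurable_from_prod_countable_right fun j => ?_
      simp only
      refine Finset.measurable_sum (Sf j) fun S _ => ?_
      refine Finset.measurable_prod (Finset.range j) fun i _ => ?_
      by_cases hi : i ∈ S
      · simp only [hi, if_true]
        exact (hqm n).comp (hTmeas i)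
      · simp [hi]
    exact h.comp (hNmeas.prodMk measurable_id)
  have hG0 : ∀ n ω, 0 ≤ G n ω := fun n ω =>
    Finset.sum_nonneg fun S _ => Finset.prod_nonneg fun i _ => by
      split_ifs
      · exact hq0 _ _
      · linarith [hp1 n]
  have hGb : ∀ n ω, G n ω ≤ (N ω : ℝ) ^ (k + 1) * (p n) ^ (k + 1) := by
    intro n ω
    have := aux_bound (Finset.range (N ω)) (k + 1) (p n) (hp0 n) (hp1 n) (fun i => q n (Tt i ω))
      (fun i => hq0 _ _) (fun i => hqp _ _)
    rw [Finset.card_range] at this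
    exact this
  have hFI : ∀ n, Integrable (F n) P := fun n => by
    refine Integrable.of_bound (hFm n).aestronglyMeasurable 1 (Eventually.of_forall fun ω => ?_)
    simp only [hF]
    split_ifs
    · rw [Real.norm_of_nonneg (Real.exp_pos _).le, Real.exp_le_one_iff]
      have : 0 ≤ ∑ i ∈ Finset.range (N ω), f (Tt i ω, s n (Xx i ω)) :=
        Finset.sum_nonneg fun i _ => hf0 _
      linarith
    · simp
  have hGI : ∀ n, Integrable (G n) P := fun n => by
    refine (hNmom.mul_const ((p n) ^ (k + 1))).mono' (hGm n).aestronglyMeasurable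
      (Eventually.of_forall fun ω => ?_)
    rw [Real.norm_of_nonneg (hG0 n ω)]
    exact hGb n ω
  have hNs : ∀ j, MeasurableSet {ω | N ω = j} := fun j => hNmeas (measurableSet_singleton j)
  have hdis : Pairwise (Function.onFun Disjoint fun j => {ω | N ω = j}) := by
    intro i j hij
    rw [Function.onFun, Set.disjoint_left]
    intro ω h1 h2
    exact hij (Eq.trans (Eq.symm h1) h2)
  have huni : (⋃ j, {ω | N ω = j}) = Set.univ := by
    ext ω
    simp
  have hpiece : ∀ n j, ∫ ω in {ω | N ω = j}, F n ω ∂P = ∫ ω in {ω | N ω = j}, G n ω ∂P := by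
    intro n j
    have eF : ∫ ω in {ω | N ω = j}, F n ω ∂P = ∫ ω in {ω | N ω = j}, ∑ S ∈ Sf j,
        ∏ i ∈ Finset.range j, g n S i (Tt i ω, Xx i ω) ∂P := by
      refine setIntegral_congr_fun (hNs j) fun ω hω => ?_
      have hω' : N ω = j := hω
      simp only [hFe, hω']
    have eG : ∫ ω in {ω | N ω = j}, G n ω ∂P = ∫ ω in {ω | N ω = j}, ∑ S ∈ Sf j,
        ∏ i ∈ Finset.range j, ∫ x, g n S i (Tt i ω, x) ∂ν ∂P := by
      refine setIntegral_congr_fun (hNs j) fun ω hω => ?_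
      have hω' : N ω = j := hω
      simp only [hG, hω']
      refine Finset.sum_congr rfl fun S _ => Finset.prod_congr rfl fun i _ => ?_
      by_cases hi : i ∈ S
      · simp [hg, hi, hq]
      · simp [hg, hi, hwp]
    have hgi0 : ∀ S i t, 0 ≤ ∫ x, g n S i (t, x) ∂ν := fun S i t => integral_nonneg fun x => hg0 _ _ _ _
    have hgi1 : ∀ S i t, ∫ x, g n S i (t, x) ∂ν ≤ 1 := fun S i t => by
      by_cases hi : i ∈ S
      · have h : ∫ x, g n S i (t, x) ∂ν = q n t := by simp [hg, hi, hq]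
        rw [h]
        exact (hqp n t).trans (hp1 n)
      · have h : ∫ x, g n S i (t, x) ∂ν = 1 - p n := by simp [hg, hi, hwp]
        rw [h]
        linarith [hp0 n]
    have hgim : ∀ S i, Measurable (fun t => ∫ x, g n S i (t, x) ∂ν) := fun S i =>
      (StronglyMeasurable.integral_prod_right (f := fun t x => g n S i (t, x))
        (hgm n S i).stronglyMeasurable).measurable
    rw [eF, eG, integral_finsetSum, integral_finsetSum]
    · refine Finset.sum_congr rfl fun S _ => ?_
      exact aux_cond ν P N Tt hTmeas Xx hXmeas j
        (aux_joint ν P N hNmeas Tt hTmeas Xx hXmeas hXlaw hIndep j) (g n S) (hgm n S) (hg0 n S) (hg1 n S)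
    · intro S _
      refine Integrable.of_bound (Finset.measurable_prod _ fun i _ =>
        (hgim S i).comp (hTmeas i)).aestronglyMeasurable 1 (Eventually.of_forall fun ω => ?_)
      rw [Real.norm_of_nonneg (Finset.prod_nonneg fun i _ => hgi0 _ _ _)]
      exact Finset.prod_le_one (fun i _ => hgi0 _ _ _) (fun i _ => hgi1 _ _ _)
    · intro S _
      refine Integrable.of_bound (Finset.measurable_prod _ fun i _ =>
        (hgm n S i).comp ((hTmeas i).prodMk (hXmeas i))).aestronglyMeasurable 1
        (Eventually.of_forall fun ω => ?_)
      rw [Real.norm_of_nonneg (Finset.prod_nonneg fun i _ => hg0 _ _ _ _)]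
      exact Finset.prod_le_one (fun i _ => hg0 _ _ _ _) (fun i _ => hg1 _ _ _ _)
  have hFG : ∀ n, ∫ ω, F n ω ∂P = ∫ ω, G n ω ∂P := by
    intro n
    have h1 := hasSum_integral_iUnion (f := F n) hNs hdis ((hFI n).integrableOn)
    have h2 := hasSum_integral_iUnion (f := G n) hNs hdis ((hGI n).integrableOn)
    rw [huni, setIntegral_univ] at h1 h2
    simp_rw [hpiece n] at h1
    exact h1.unique h2
  -- dominated convergence
  obtain ⟨C, hC⟩ := hpl.bddAbove_range
  have hC' : ∀ n : ℕ, (n : ℝ) * p n ≤ C := fun n => hC ⟨n, rfl⟩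
  rw [← integral_const_mul]
  have hgoal : ∀ n : ℕ, (n : ℝ) ^ (k + 1) * ∫ ω, F n ω ∂P = ∫ ω, (n : ℝ) ^ (k + 1) * G n ω ∂P := by
    intro n
    rw [hFG, integral_const_mul]
  change Tendsto (fun n : ℕ => (n : ℝ) ^ (k + 1) * ∫ ω, F n ω ∂P) atTop _
  simp_rw [hgoal]
  refine tendsto_integral_of_dominated_convergence (fun ω => (N ω : ℝ) ^ (k + 1) * C ^ (k + 1))
    (fun n => ((hGm n).const_mul _).aestronglyMeasurable) (hNmom.mul_const _) ?_ ?_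
  · refine fun n => Eventually.of_forall fun ω => ?_
    have hn : (0 : ℝ) ≤ (n : ℝ) ^ (k + 1) := by positivity
    rw [Real.norm_of_nonneg (mul_nonneg hn (hG0 n ω))]
    calc (n : ℝ) ^ (k + 1) * G n ω
        ≤ (n : ℝ) ^ (k + 1) * ((N ω : ℝ) ^ (k + 1) * (p n) ^ (k + 1)) :=
          mul_le_mul_of_nonneg_left (hGb n ω) hn
      _ = (N ω : ℝ) ^ (k + 1) * ((n : ℝ) * p n) ^ (k + 1) := by
          rw [mul_pow]
          ring
      _ ≤ (N ω : ℝ) ^ (k + 1) * C ^ (k + 1) := by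
          refine mul_le_mul_of_nonneg_left ?_ (by positivity)
          exact pow_le_pow_left₀ (mul_nonneg (Nat.cast_nonneg n) (hp0 n)) (hC' n) _
  · refine Eventually.of_forall fun ω => ?_
    have h := aux_lim (Finset.range (N ω)) (k + 1) p _ (fun n i => q n (Tt i ω))
      (fun i => ∫ x in {x | r ≤ dist x0 x}, Real.exp (-f (Tt i ω, x)) ∂μ) hpl (fun i => hql _)
    have e := aux_fact (Finset.range (N ω)) (k + 1)
      (fun i => ∫ x in {x | r ≤ dist x0 x}, Real.exp (-f (Tt i ω, x)) ∂μ)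
    rw [e, inv_mul_cancel_left₀ (by positivity)]
    exact h
end
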